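/- Let K be a field, A, B nonnegative integers, X = (X_{i,j})_{0 ≤ i ≤ A, 0 ≤ j ≤ B} a matrix of independent indeterminates, and M = [u_1,...,u_n | v_1,...,v_n] a bivector of positive integers with u_1 < ... < u_n ≤ A+1 and v_1 < ... < v_n ≤ B+1. For i = 1, ..., n set t_i = min{B + u_{n−j+1} − 1 − 2(i−j), A + v_{n−j+1} − 1 − 2(i−j) : 1 ≤ j ≤ i}. Then there is a polynomial H ∈ ℤ[z] with H(1) ≠ 0 such that (Σ_{ℓ≥0} dim_K R_M(X)_ℓ · z^ℓ) · (1 − z)^d = H, where d = (A + B + 3)n − Σ_{i=1}^n (u_i + v_i), and deg(H) − d = Σ_{i=1}^n t_i − (A + B + 1)n; that is, the a-invariant of the determinantal ring R_M(X) equals Σ_{i=1}^n t_i − (A + B + 1)n. -/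

import Mathlib

/-! The Hilbert function of the determinantal ring counts the pairs of semistandard tableaux of the
same shape whose row `i` has entries at least `u (i + 1) - 1`, respectively `v (i + 1) - 1`
(rows and columns of the matrix being numbered from the end).

*A basis of the ring.*  A pair of tableaux of the same shape gives a bitableau, the product of the
minors of the generic matrix indexed by the pairs of corresponding columns.  The generic matrix
specializes to a product of two generic matrices with zeros prescribed by `u` and `v` (`flagMap`).
This kills the cogenerated ideal (`detIdeal_le_ker`) and, by Cauchy–Binet, the images of the
bitableaux whose tableaux satisfy the flag conditions have leading monomials from which the
tableaux can be read off; hence these bitableaux are linearly independent in the quotient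
(`linearIndependent_flagMap`).  For the bivector `[1, 2, … | 1, 2, …]` of maximal length they are as
numerous as the monomials, by the counting below, so they span the polynomial ring
(`homogeneous_le_span_bitableau`); this replaces both straightening and the
Robinson–Schensted–Knuth correspondence.  A standard bitableau violating the flag conditions of
`u` and `v` lies in the ideal, by Laplace expansion of the minor of its first columns
(`bitableau_mem_or`).

*Counting.*  The number of tableaux of given shape is a determinant of binomial coefficients
(`exists_finset_isGT`), by the branching rule for Gelfand–Tsetlin patterns.  Summing over shapes
with the Cauchy–Binet formula, the generating function of the pairs becomes a determinant of series
`∑ l, (l + c).choose κ * (l + c').choose κ' * z ^ l` (`exists_finset_pairs`).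

*The degree of the numerator.*  Each entry is a polynomial over a power of `1 - z`, and reversing
the coefficients of this polynomial amounts to replacing the entry by the series of the values at
negative integers (`IsNumerator`).  So the reversed numerator of the determinant is given by
another Cauchy–Binet sum, with nonnegative terms, and the degree is determined by the smallest
exponent of a positive term.  Positivity holds exactly above explicit bounds
(`det_choose_sub_pos`), and the least strictly decreasing sequence respecting these bounds yields
the numbers `t_i` (`exists_numerator_bivector`).  The value of the numerator at `1` is a
determinant of binomial coefficients, which is positive (`det_choose_add_pos`).
-/

/-- A lattice path from `A` to `B`: a list of points of `ℤ × ℤ` whose consecutive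
differences are the unit steps `(1,0)` or `(0,1)`, starting at `A` and ending at `B`. -/
def IsLatticePathFrom (P : List (ℤ × ℤ)) (A B : ℤ × ℤ) : Prop :=
  P.Chain' (fun p q => q = (p.1 + 1, p.2) ∨ q = (p.1, p.2 + 1)) ∧
    P.head? = some A ∧ P.getLast? = some B

/-- The list of NE-turns of a lattice path: the points of the path that are the end
point of a vertical step and at the same time the starting point of a horizontal step. -/
def NETurns : List (ℤ × ℤ) → List (ℤ × ℤ)
  | p :: q :: r :: rest =>
      (if q = (p.1, p.2 + 1) ∧ r = (q.1 + 1, q.2) then [q] else []) ++ NETurns (q :: r :: rest)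
  | _ => []

/-- `(x,y)` lies weakly south-east of `S` if `x ≥ S.1` or `y ≤ S.2`. -/
def WeaklySE (p S : ℤ × ℤ) : Prop := S.1 ≤ p.1 ∨ p.2 ≤ S.2

/-- `(x,y)` lies weakly north-west of `T` if `x ≤ T.1` or `y ≥ T.2`. -/
def WeaklyNW (p T : ℤ × ℤ) : Prop := p.1 ≤ T.1 ∨ T.2 ≤ p.2

/-- A path stays weakly south-east of `S` if every point on it does. -/
def StaysSE (P : List (ℤ × ℤ)) (S : ℤ × ℤ) : Prop := ∀ p ∈ P, WeaklySE p S

/-- A path stays weakly north-west of `T` if every point on it does. -/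
def StaysNW (P : List (ℤ × ℤ)) (T : ℤ × ℤ) : Prop := ∀ p ∈ P, WeaklyNW p T

/-- A family of lattice paths is non-intersecting if no two of its members share a point. -/
def NonIntersecting {n : ℕ} (F : Fin n → List (ℤ × ℤ)) : Prop :=
  ∀ i j, i ≠ j → ∀ p, p ∈ F i → p ∉ F j

/-- `Λ` is a ladder: together with any two positions `(i,j) ≤ (i',j')` it contains the
whole interval between them. -/
def IsLadder {A B : ℕ} (Λ : Set (Fin (A + 1) × Fin (B + 1))) : Prop :=
  ∀ p ∈ Λ, ∀ p' ∈ Λ, p.1 ≤ p'.1 → p.2 ≤ p'.2 →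
    ∀ (s : Fin (A + 1)) (t : Fin (B + 1)),
      p.1 ≤ s → s ≤ p'.1 → p.2 ≤ t → t ≤ p'.2 → (s, t) ∈ Λ

/-- The ladder region associated with a ladder `Λ`: the set of points `(j, A−i)` for
`(i,j) ∈ Λ`. -/
def ladderRegion {A B : ℕ} (Λ : Set (Fin (A + 1) × Fin (B + 1))) : Set (ℤ × ℤ) :=
  {p | ∃ q ∈ Λ, p = (((q.2 : ℕ) : ℤ), (A : ℤ) - ((q.1 : ℕ) : ℤ))}

open Classical in
/-- The matrix `Y` associated with a ladder `Λ`: the entry at a position of `Λ` is the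
corresponding variable of the polynomial ring `K[Y]`, all other entries are `0`. -/
noncomputable def ladderMatrix (K : Type*) [Field K] {A B : ℕ}
    (Λ : Set (Fin (A + 1) × Fin (B + 1))) :
    Matrix (Fin (A + 1)) (Fin (B + 1)) (MvPolynomial {q // q ∈ Λ} K) :=
  fun i j => if h : (i, j) ∈ Λ then MvPolynomial.X ⟨(i, j), h⟩ else 0

/-- The ladder determinantal ideal cogenerated by the bivector
`M = [u 1,...,u n | v 1,...,v n]` (with the conventions `u (n+1) = A+2`, `v (n+1) = B+2`
imposed as hypotheses in the theorems): it is generated, for `1 ≤ t ≤ n+1`, by the `t×t`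
minors of `Y` all of whose positions lie in `Λ` and whose rows all lie among the last
`u t − 1` rows, or whose columns all lie among the last `v t − 1` columns. -/
noncomputable def ladderIdeal (K : Type*) [Field K] {A B : ℕ}
    (Λ : Set (Fin (A + 1) × Fin (B + 1))) (n : ℕ) (u v : ℕ → ℕ) :
    Ideal (MvPolynomial {q // q ∈ Λ} K) :=
  Ideal.span {f | ∃ t : ℕ, 1 ≤ t ∧ t ≤ n + 1 ∧
    ∃ (r : Fin t → Fin (A + 1)) (c : Fin t → Fin (B + 1)),
      StrictMono r ∧ StrictMono c ∧ (∀ k l, (r k, c l) ∈ Λ) ∧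
      ((∀ k, A + 2 ≤ (r k : ℕ) + u t) ∨ (∀ l, B + 2 ≤ (c l : ℕ) + v t)) ∧
      f = (((ladderMatrix K Λ).submatrix r c).det)}

/-- The dimension of the degree-`ℓ` homogeneous component of the quotient of a polynomial
ring by a (homogeneous) ideal `I`: the image of the space of homogeneous polynomials of
degree `ℓ` in the quotient. -/
noncomputable def quotDim (K : Type*) [Field K] {σ : Type*}
    (I : Ideal (MvPolynomial σ K)) (ℓ : ℕ) : ℕ :=
  Module.finrank K
    (Submodule.map (Ideal.Quotient.mkₐ K I).toLinearMap
      (MvPolynomial.homogeneousSubmodule σ K ℓ))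

/-- The Hilbert series `Σ_ℓ dim_K (R_M(Y))_ℓ zˡ`, as a power series over `ℤ`. -/
noncomputable def hilbertSeries (K : Type*) [Field K] {σ : Type*}
    (I : Ideal (MvPolynomial σ K)) : PowerSeries ℤ :=
  PowerSeries.mk fun ℓ => (quotDim K I ℓ : ℤ)

/-- The recursively defined regions `L⁽ⁱ⁾` of Theorem 5, counted downwards from
`L⁽ⁿ⁺¹⁾ = L`; `Lseq L E1 A2 j` is `L⁽ⁿ⁺¹⁻ʲ⁾`, where `E1 j` resp. `A2 j` are the first
coordinate of `E⁽ⁿ⁻ʲ⁾` resp. the second coordinate of `A⁽ⁿ⁻ʲ⁾`. -/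
def Lseq (L : Set (ℤ × ℤ)) (E1 A2 : ℕ → ℤ) : ℕ → Set (ℤ × ℤ)
  | 0 => L
  | j + 1 => {P ∈ Lseq L E1 A2 j |
      P.1 ≤ E1 j ∧ A2 j ≤ P.2 ∧ (P.1 + 1, P.2 - 1) ∈ Lseq L E1 A2 j}

/-- The generic `(A+1) × (B+1)` matrix `X` of independent indeterminates. -/
noncomputable def genericMatrix (K : Type*) [Field K] (A B : ℕ) :
    Matrix (Fin (A + 1)) (Fin (B + 1)) (MvPolynomial (Fin (A + 1) × Fin (B + 1)) K) :=
  fun i j => MvPolynomial.X (i, j)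

/-- The determinantal ideal of `K[X]` cogenerated by the bivector
`M = [u 1,...,u n | v 1,...,v n]` (with the conventions `u (n+1) = A+2`, `v (n+1) = B+2`
imposed as hypotheses in the theorems): it is generated, for `1 ≤ t ≤ n+1`, by the `t×t`
minors of `X` whose rows all lie among the last `u t − 1` rows, or whose columns all lie
among the last `v t − 1` columns. -/
noncomputable def detIdeal (K : Type*) [Field K] (A B n : ℕ) (u v : ℕ → ℕ) :
    Ideal (MvPolynomial (Fin (A + 1) × Fin (B + 1)) K) :=
  Ideal.span {f | ∃ t : ℕ, 1 ≤ t ∧ t ≤ n + 1 ∧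
    ∃ (r : Fin t → Fin (A + 1)) (c : Fin t → Fin (B + 1)),
      StrictMono r ∧ StrictMono c ∧
      ((∀ k, A + 2 ≤ (r k : ℕ) + u t) ∨ (∀ l, B + 2 ≤ (c l : ℕ) + v t)) ∧
      f = (((genericMatrix K A B).submatrix r c).det)}

/-! ### The Cauchy–Binet formula and telescoping of determinants -/

/-- The Cauchy–Binet formula. -/
theorem det_mul_cauchyBinet {R ι : Type*} [CommRing R] [LinearOrder ι] [Fintype ι] {t : ℕ}
    (M : Matrix (Fin t) ι R) (N : Matrix ι (Fin t) R) :
    (M * N).det = ∑ s : Fin t → ι with StrictMono s,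
      (M.submatrix id s).det * (N.submatrix s id).det := by
  classical
  have h1 : (M * N).det = ∑ f : Fin t → ι, (∏ i, M i (f i)) * (N.submatrix f id).det := by
    have : M * N = Matrix.of fun i => ∑ k, M i k • N k := by
      ext i j
      simp [Matrix.mul_apply]
    rw [this]
    have h2 := (Matrix.detRowAlternating (R := R) (n := Fin t)).toMultilinearMap.map_sum
      (fun (i : Fin t) (k : ι) => M i k • N k)
    have h3 : ∀ f : Fin t → ι, (Matrix.detRowAlternating (R := R) (n := Fin t)).toMultilinearMap
        (fun i => M i (f i) • N (f i)) = (∏ i, M i (f i)) * (N.submatrix f id).det := by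
      intro f
      rw [MultilinearMap.map_smul_univ, smul_eq_mul]
      rfl
    simp_rw [h3] at h2
    exact h2
  rw [h1]
  have h2 : ∑ f : Fin t → ι, (∏ i, M i (f i)) * (N.submatrix f id).det
      = ∑ f : Fin t → ι with Function.Injective f,
        (∏ i, M i (f i)) * (N.submatrix f id).det := by
    refine (Finset.sum_filter_of_ne fun f _ hf => ?_).symm
    by_contra hinj
    apply hf
    rw [Function.Injective] at hinj
    push Not at hinj
    obtain ⟨i, j, hij, hne⟩ := hinj
    rw [Matrix.det_zero_of_row_eq hne (by ext k; simp [hij]), mul_zero]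
  rw [h2]
  have h3 : ∑ s : Fin t → ι with StrictMono s,
      (M.submatrix id s).det * (N.submatrix s id).det
      = ∑ p ∈ (Finset.univ.filter fun s : Fin t → ι => StrictMono s) ×ˢ
          (Finset.univ : Finset (Equiv.Perm (Fin t))),
        (∏ i, M i (p.1 (p.2 i))) * (N.submatrix (p.1 ∘ p.2) id).det := by
    rw [Finset.sum_product]
    refine Finset.sum_congr rfl fun s _ => ?_
    rw [← Matrix.det_transpose (M.submatrix id s), Matrix.det_apply', Finset.sum_mul]
    refine Finset.sum_congr rfl fun σ _ => ?_
    have := Matrix.det_permute σ (N.submatrix s id)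
    rw [Matrix.submatrix_submatrix] at this
    simp only [Function.comp_id] at this ⊢
    rw [this]
    simp only [Matrix.transpose_apply, Matrix.submatrix_apply, id]
    ring
  rw [h3]
  symm
  refine Finset.sum_bij (fun p _ => p.1 ∘ p.2) ?_ ?_ ?_ ?_
  · rintro ⟨s, σ⟩ h
    simp only [Finset.mem_product, Finset.mem_filter, Finset.mem_univ, true_and, and_true] at h ⊢
    exact h.injective.comp σ.injective
  · rintro ⟨s, σ⟩ h ⟨s', σ'⟩ h' heq
    simp only [Finset.mem_product, Finset.mem_filter, Finset.mem_univ, true_and, and_true] at h h'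
    have hs : s = s' := by
      rw [← StrictMono.range_inj h h', ← σ.surjective.range_comp s, ← σ'.surjective.range_comp s',
        heq]
    subst hs
    have : σ = σ' := by
      ext i
      have := congrFun heq i
      simp only [Function.comp_apply] at this
      rw [h.injective this]
    rw [this]
  · intro f hf
    simp only [Finset.mem_filter, Finset.mem_univ, true_and] at hf
    refine ⟨(f ∘ Tuple.sort f, (Tuple.sort f)⁻¹), ?_, ?_⟩
    · simp only [Finset.mem_product, Finset.mem_filter, Finset.mem_univ, true_and, and_true]
      exact (Tuple.monotone_sort f).strictMono_of_injective (hf.comp (Equiv.injective _))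
    · ext i
      simp
  · rintro ⟨s, σ⟩ h
    rfl

/-- Telescoping of determinants: if `x 0 ≥ x 1 ≥ ⋯ ≥ x n` and the last row of an
`(n+1) × (n+1)` matrix `(H i (x j))` is constant `1`, its determinant is the sum, over all `y`
interlacing `x`, of the determinants of the `n × n` matrices of differences. -/
theorem det_telescope {R : Type*} [CommRing R] {n : ℕ} (H : Fin n → ℕ → R)
    (x : Fin (n + 1) → ℕ) (hx : ∀ j : Fin n, x j.succ ≤ x j.castSucc) :
    (Matrix.of fun i j : Fin (n + 1) => Fin.lastCases (motive := fun _ => R) 1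
      (fun i' => H i' (x j)) i).det
    = ∑ y ∈ Fintype.piFinset fun j : Fin n => Finset.Ico (x j.succ) (x j.castSucc),
      (Matrix.of fun i j : Fin n => H i (y j + 1) - H i (y j)).det := by
  classical
  have h1 : (Matrix.of fun i j : Fin n => H i (x j.castSucc) - H i (x j.succ)).det
      = ∑ y ∈ Fintype.piFinset fun j : Fin n => Finset.Ico (x j.succ) (x j.castSucc),
      (Matrix.of fun i j : Fin n => H i (y j + 1) - H i (y j)).det := by
    rw [← Matrix.det_transpose]
    have h2 := (Matrix.detRowAlternating (R := R) (n := Fin n)).toMultilinearMap.map_sum_finset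
      (fun (j : Fin n) (k : ℕ) => fun i : Fin n => H i (k + 1) - H i k)
      (fun j : Fin n => Finset.Ico (x j.succ) (x j.castSucc))
    have h3 : (Matrix.of fun i j : Fin n => H i (x j.castSucc) - H i (x j.succ)).transpose
        = fun j => ∑ k ∈ Finset.Ico (x j.succ) (x j.castSucc), fun i => H i (k + 1) - H i k := by
      ext j i
      rw [Finset.sum_apply, Finset.sum_Ico_sub (H i) (hx j)]
      rfl
    rw [h3]
    refine h2.trans (Finset.sum_congr rfl fun y _ => ?_)
    rw [← Matrix.det_transpose]
    rfl
  rw [← h1]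
  rw [Matrix.det_eq_of_forall_col_eq_smul_add_pred (c := fun _ => 1)
    (B := Matrix.of fun i j : Fin (n + 1) => Fin.cases (motive := fun _ => R)
      (Fin.lastCases (motive := fun _ => R) 1 (fun i' => H i' (x 0)) i)
      (fun j' => Fin.lastCases (motive := fun _ => R) 0
        (fun i' => H i' (x j'.succ) - H i' (x j'.castSucc)) i) j)]
  · rw [Matrix.det_succ_row _ (Fin.last n), Finset.sum_eq_single 0]
    · have h4 : ((Matrix.of fun i j : Fin (n + 1) => Fin.cases (motive := fun _ => R)
          (Fin.lastCases (motive := fun _ => R) 1 (fun i' => H i' (x 0)) i)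
          (fun j' => Fin.lastCases (motive := fun _ => R) 0
            (fun i' => H i' (x j'.succ) - H i' (x j'.castSucc)) i) j).submatrix
          (Fin.last n).succAbove (Fin.succAbove 0)) =
          -(Matrix.of fun i j : Fin n => H i (x j.castSucc) - H i (x j.succ)) := by
        ext i j
        simp
      rw [h4, Matrix.det_neg]
      simp only [Matrix.of_apply, Fin.cases_zero, Fin.lastCases_last, Fin.val_last, Fin.val_zero,
        add_zero, mul_one, Fintype.card_fin]
      rw [← mul_assoc, ← mul_pow]
      simp
    · intro j _ hj
      obtain ⟨j', rfl⟩ := Fin.exists_succ_eq.mpr hj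
      simp
    · simp
  · intro i
    simp
  · intro i j
    refine Fin.lastCases ?_ (fun i' => ?_) i <;> simp

/-! ### Gelfand–Tsetlin patterns -/

/-- Gelfand–Tsetlin patterns encoding semistandard tableaux: `g a i` is the number of entries
`< a` in row `i`.  The tableau has `n` rows, shape `lam`, entries `< m`, and the entries of
row `i` are `≥ U i`. -/
structure IsGT (n : ℕ) (U : ℕ → ℕ) (m : ℕ) (lam : ℕ → ℕ) (g : ℕ → ℕ → ℕ) : Prop where
  zero : ∀ a i, n ≤ i → g a i = 0
  flag : ∀ a i, i < n → a ≤ U i → g a i = 0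
  mono : ∀ a i, g a i ≤ g (a + 1) i
  strict : ∀ a i j, i < j → g (a + 1) j ≤ g a i
  top : ∀ a, m ≤ a → g a = lam

namespace IsGT

variable {n m : ℕ} {U lam : ℕ → ℕ} {g : ℕ → ℕ → ℕ}

theorem lam_anti (h : IsGT n U m lam g) : Antitone lam := by
  intro i j hij
  rcases hij.eq_or_lt with rfl | hij
  · exact le_rfl
  · have := h.strict m i j hij
    rwa [h.top _ le_rfl, h.top _ (Nat.le_succ m)] at this

theorem lam_zero (h : IsGT n U m lam g) {i : ℕ} (hi : n ≤ i) : lam i = 0 := by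
  rw [← h.top m le_rfl]
  exact h.zero _ _ hi

/-- A last row whose entries would have to be `≥ m` is empty. -/
theorem succ_iff {n m : ℕ} {U lam : ℕ → ℕ} {g : ℕ → ℕ → ℕ} (hU : U n = m) :
    IsGT (n + 1) U m lam g ↔ IsGT n U m lam g := by
  constructor
  · intro h
    refine ⟨fun a i hi => ?_, fun a i hi => h.flag a i (by omega), h.mono, h.strict, h.top⟩
    rcases hi.eq_or_lt with rfl | hi
    · rcases le_or_gt a m with ha | ha
      · exact h.flag a _ (by omega) (by omega)
      · rw [h.top a ha.le, ← h.top m le_rfl]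
        exact h.flag m _ (by omega) (by omega)
    · exact h.zero a i hi
  · intro h
    refine ⟨fun a i hi => h.zero a i (by omega), fun a i hi ha => ?_, h.mono, h.strict, h.top⟩
    rcases (Nat.lt_succ_iff.mp hi).eq_or_lt with rfl | hi
    · exact h.zero _ _ le_rfl
    · exact h.flag a i hi ha

end IsGT

/-- The partition with strictly decreasing shifted parts `y j = μ j + (k - 1 - j)`. -/
def unshift (k : ℕ) (y : Fin k → ℕ) : ℕ → ℕ :=
  fun i => if h : i < k then y ⟨i, h⟩ - (k - 1 - i) else 0

/-- Adjoining the top row `lam` to a pattern with `m` levels. -/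
def addTop (m : ℕ) (lam : ℕ → ℕ) (h : ℕ → ℕ → ℕ) : ℕ → ℕ → ℕ :=
  fun a => if a ≤ m then h a else lam

/-- The branching rule: deleting the entries equal to `m` of a tableau of shape `lam` leaves a
tableau whose shape interlaces `lam`. -/
theorem isGT_succ_iff {n m k : ℕ} {U lam : ℕ → ℕ} (hU : ∀ i < n, U i ≤ m)
    (hnk : ∀ mu h, IsGT n U m mu h ↔ IsGT k U m mu h)
    (hlam : Antitone lam) (hlam0 : ∀ i, k < i → lam i = 0) (hlam1 : ∀ i, n ≤ i → lam i = 0)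
    (g : ℕ → ℕ → ℕ) :
    IsGT n U (m + 1) lam g ↔
      ∃ y ∈ Fintype.piFinset (fun j : Fin k =>
          Finset.Ico (lam (j + 1) + (k - (j + 1))) (lam j + (k - j))),
        ∃ h, IsGT k U m (unshift k y) h ∧ addTop m lam h = g := by
  constructor
  · intro hg
    have hmid : ∀ i, lam (i + 1) ≤ g m i ∧ g m i ≤ lam i := by
      intro i
      have h1 := hg.strict m i (i + 1) (by omega)
      have h2 := hg.mono m i
      rw [hg.top (m + 1) le_rfl] at h1 h2
      exact ⟨h1, h2⟩
    have hmu : unshift k (fun j => g m j + (k - 1 - j)) = g m := by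
      funext i
      unfold unshift
      split_ifs with hi
      · simp
      · rcases (not_lt.mp hi).eq_or_lt with rfl | hi'
        · by_cases hkn : n ≤ k
          · exact (hg.zero _ _ hkn).symm
          · have hgn : IsGT n U m (g m) (fun a => g (min a m)) := by
              refine ⟨fun a i => hg.zero _ i, fun a i hi ha => hg.flag _ i hi (by omega),
                fun a i => ?_, fun a i j hij => ?_, fun a ha => by simp [ha]⟩
              · rcases lt_or_ge a m with h | h
                · rw [min_eq_left h.le, min_eq_left (by omega)]; exact hg.mono a i
                · rw [min_eq_right h, min_eq_right (by omega)]
              · rcases lt_or_ge a m with h | h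
                · rw [min_eq_left h.le, min_eq_left (by omega)]; exact hg.strict a i j hij
                · rw [min_eq_right h, min_eq_right (by omega)]
                  exact (hg.mono m j).trans (hg.strict m i j hij)
            exact (((hnk _ _).1 hgn).lam_zero le_rfl).symm
        · have := (hmid i).2
          have := hlam0 i hi'
          omega
    refine ⟨fun j => g m j + (k - 1 - j), ?_, fun a => g (min a m), ?_, ?_⟩
    · rw [Fintype.mem_piFinset]
      intro j
      rw [Finset.mem_Ico]
      have := hmid j
      have := j.2
      omega
    · rw [hmu, ← hnk]
      refine ⟨fun a i => hg.zero _ i, fun a i hi ha => hg.flag _ i hi (by omega),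
        fun a i => ?_, fun a i j hij => ?_, fun a ha => by simp [ha]⟩
      · rcases lt_or_ge a m with h | h
        · rw [min_eq_left h.le, min_eq_left (by omega)]; exact hg.mono a i
        · rw [min_eq_right h, min_eq_right (by omega)]
      · rcases lt_or_ge a m with h | h
        · rw [min_eq_left h.le, min_eq_left (by omega)]; exact hg.strict a i j hij
        · rw [min_eq_right h, min_eq_right (by omega)]
          exact (hg.mono m j).trans (hg.strict m i j hij)
    · funext a
      unfold addTop
      split_ifs with h
      · change g (min a m) = g a
        rw [min_eq_left h]
      · exact (hg.top a (by omega)).symm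
  · rintro ⟨y, hy, h, hh, rfl⟩
    rw [Fintype.mem_piFinset] at hy
    have hmid : ∀ i, lam (i + 1) ≤ h m i ∧ h m i ≤ lam i := by
      intro i
      rw [hh.top m le_rfl]
      unfold unshift
      split_ifs with hi
      · have := hy ⟨i, hi⟩
        rw [Finset.mem_Ico] at this
        simp only at this
        omega
      · rw [hlam0 (i + 1) (by omega)]
        simp
    have hn := (hnk _ _).2 hh
    refine ⟨fun a i hi => ?_, fun a i hi ha => ?_, fun a i => ?_, fun a i j hij => ?_,
      fun a ha => ?_⟩
    · unfold addTop
      split_ifs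
      · exact hn.zero a i hi
      · exact hlam1 i hi
    · unfold addTop
      rw [if_pos (ha.trans (hU i hi))]
      exact hn.flag a i hi ha
    · unfold addTop
      rcases lt_trichotomy a m with h1 | h1 | h1
      · rw [if_pos h1.le, if_pos (by omega)]; exact hn.mono a i
      · rw [if_pos h1.le, if_neg (by omega), h1]; exact (hmid i).2
      · rw [if_neg (by omega), if_neg (by omega)]
    · unfold addTop
      rcases lt_trichotomy a m with h1 | h1 | h1
      · rw [if_pos h1.le, if_pos (by omega)]; exact hn.strict a i j hij
      · rw [if_pos h1.le, if_neg (by omega), h1]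
        exact (hlam (by omega : i + 1 ≤ j)).trans (hmid i).1
      · rw [if_neg (by omega), if_neg (by omega)]; exact hlam hij.le
    · unfold addTop
      rw [if_neg (by omega)]

/-- The number of tableaux is a determinant of binomial coefficients: the branching rule matches
the telescoping of determinants, as `(x + 1).choose k - x.choose k = x.choose (k - 1)`. -/
theorem exists_finset_isGT (m : ℕ) : ∀ (n : ℕ) (U : ℕ → ℕ) (_ : ∀ i j, i < j → j < n → U i < U j)
    (_ : ∀ i < n, U i < m) (lam : ℕ → ℕ) (_ : Antitone lam) (_ : ∀ i, n ≤ i → lam i = 0),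
    ∃ S : Finset (ℕ → ℕ → ℕ), (∀ g, g ∈ S ↔ IsGT n U m lam g) ∧
      (S.card : ℤ) = (Matrix.of fun i j : Fin n =>
        (Nat.choose (lam j + (n - 1 - j) + (m - 1 - U i - (n - 1 - i)))
          (m - 1 - U i) : ℤ)).det := by
  classical
  induction m with
  | zero =>
    intro n U _ hm lam _ hlam0
    obtain rfl : n = 0 := by
      by_contra h
      exact absurd (hm 0 (by omega)) (by omega)
    have hl : lam = fun _ => 0 := funext fun i => hlam0 i (by omega)
    refine ⟨{fun _ _ => 0}, fun g => ?_, by simp⟩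
    rw [Finset.mem_singleton]
    constructor
    · rintro rfl
      exact ⟨fun _ _ _ => rfl, fun _ _ _ _ => rfl, fun _ _ => le_rfl, fun _ _ _ _ => le_rfl,
        fun _ _ => hl.symm⟩
    · intro h
      funext a i
      exact h.zero a i (by omega)
  | succ m ih =>
    intro n U hU hm lam hlam hlam1
    have hUi : ∀ i j, i < j → j < n → U i + (j - i) ≤ U j := by
      intro i j hij hj
      induction j, hij using Nat.le_induction with
      | base =>
        have := hU i (i + 1) (by omega) hj
        simp only [Nat.succ_eq_add_one]
        omega
      | succ j hij ih2 =>
        have := hU j (j + 1) (by omega) hj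
        have := ih2 (by omega)
        omega
    -- the number `k` of rows which can contain entries smaller than `m`
    obtain ⟨k, hk, hkm, hnk, hlam0, hcase⟩ : ∃ k, k ≤ n ∧ (∀ i < k, U i < m) ∧
        (∀ mu h, IsGT n U m mu h ↔ IsGT k U m mu h) ∧ (∀ i, k < i → lam i = 0) ∧
        ((n = k + 1 ∧ U k = m) ∨ n = k) := by
      by_cases h : ∃ k, n = k + 1 ∧ U k = m
      · obtain ⟨k, rfl, hk⟩ := h
        refine ⟨k, by omega, fun i hi => ?_, fun mu h => IsGT.succ_iff hk,
          fun i hi => hlam1 i (by omega), Or.inl ⟨rfl, hk⟩⟩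
        have := hU i k hi (by omega)
        omega
      · refine ⟨n, le_rfl, fun i hi => ?_, fun _ _ => Iff.rfl, fun i hi => hlam1 i hi.le,
          Or.inr rfl⟩
        push Not at h
        have h1 := hm i hi
        have h2 := h (n - 1) (by omega)
        have h3 := hm (n - 1) (by omega)
        rcases (show i ≤ n - 1 by omega).eq_or_lt with rfl | h4
        · omega
        · have := hU i (n - 1) h4 (by omega)
          omega
    set P := Fintype.piFinset (fun j : Fin k =>
          Finset.Ico (lam (j + 1) + (k - (j + 1))) (lam j + (k - j))) with hP
    have hPanti : ∀ y ∈ P, Antitone (unshift k y) := by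
      intro y hy
      rw [hP, Fintype.mem_piFinset] at hy
      refine antitone_nat_of_succ_le fun i => ?_
      unfold unshift
      by_cases h1 : i + 1 < k
      · rw [dif_pos h1, dif_pos (by omega)]
        have h2 := hy ⟨i, by omega⟩
        have h3 := hy ⟨i + 1, h1⟩
        rw [Finset.mem_Ico] at h2 h3
        simp only at h2 h3
        omega
      · rw [dif_neg h1]; exact Nat.zero_le _
    choose! S hS hScard using fun y (hy : y ∈ P) => ih k U
      (fun i j hij hj => hU i j hij (by omega)) hkm (unshift k y) (hPanti y hy)
      (fun i hi => by unfold unshift; rw [dif_neg (by omega)])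
    have hyeq : ∀ y ∈ P, ∀ j : Fin k, unshift k y j + (k - 1 - j) = y j := by
      intro y hy j
      rw [hP, Fintype.mem_piFinset] at hy
      have := hy j
      rw [Finset.mem_Ico] at this
      unfold unshift
      rw [dif_pos j.2]
      simp only [Fin.eta]
      omega
    refine ⟨(P.biUnion S).image (addTop m lam), fun g => ?_, ?_⟩
    · rw [isGT_succ_iff (fun i hi => Nat.lt_succ_iff.mp (hm i hi)) hnk hlam hlam0 hlam1]
      simp only [Finset.mem_image, Finset.mem_biUnion]
      constructor
      · rintro ⟨h, ⟨y, hy, hh⟩, rfl⟩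
        exact ⟨y, hy, h, (hS y hy h).1 hh, rfl⟩
      · rintro ⟨y, hy, h, hh, rfl⟩
        exact ⟨h, ⟨y, hy, (hS y hy h).2 hh⟩, rfl⟩
    · rw [Finset.card_image_of_injOn, Finset.card_biUnion]
      · rw [Nat.cast_sum]
        have htel := det_telescope (R := ℤ) (n := k)
          (fun i x => ((x + (m - 1 - U i - (k - 1 - i))).choose (m - 1 - U i + 1) : ℤ))
          (fun j => lam j + (k - j)) (fun j => by
            have := hlam (show (j : ℕ) ≤ j + 1 by omega)
            simp only [Fin.val_succ, Fin.val_castSucc]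
            omega)
        refine Eq.trans (Eq.trans (Finset.sum_congr rfl fun y hy => ?_) htel.symm) ?_
        · rw [hScard y hy]
          congr 1
          ext i j
          simp only [Matrix.of_apply]
          rw [hyeq y hy, show y j + 1 + (m - 1 - U i - (k - 1 - i)) =
            (y j + (m - 1 - U i - (k - 1 - i))) + 1 by ring, Nat.choose_succ_succ]
          push_cast
          ring
        have hc : ∀ i : Fin k, k - 1 - i ≤ m - 1 - U i := by
          intro i
          have h1 := hkm (k - 1) (by have := i.2; omega)
          have h2 := i.2
          rcases (show (i : ℕ) ≤ k - 1 by omega).eq_or_lt with h3 | h3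
          · omega
          · have := hUi i (k - 1) h3 (by omega)
            omega
        rcases hcase with ⟨rfl, hUk⟩ | rfl
        · congr 1
          ext i j
          refine Fin.lastCases ?_ (fun i => ?_) i
          · simp [hUk]
          · have h1 := hc i
            have h2 := hkm i i.2
            have h3 := i.2
            simp only [Matrix.of_apply, Fin.lastCases_castSucc, Fin.val_castSucc]
            congr 2 <;> omega
        · rw [Matrix.det_succ_column _ (Fin.last n), Finset.sum_eq_single (Fin.last n)]
          · simp only [Matrix.of_apply, Fin.lastCases_last, Fin.succAbove_last]
            rw [← two_mul, pow_mul]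
            simp only [neg_one_sq, one_pow, one_mul]
            congr 1
            ext i j
            have h1 := hc i
            have h2 := hkm i i.2
            have h3 := i.2
            have h4 := j.2
            simp only [Matrix.submatrix_apply, Matrix.of_apply, Fin.lastCases_castSucc,
              Fin.val_castSucc]
            congr 2 <;> omega
          · intro i _ hi
            obtain ⟨i, rfl⟩ := Fin.exists_castSucc_eq.mpr hi
            simp only [Matrix.of_apply, Fin.lastCases_castSucc, Fin.val_last]
            rw [hlam1 n le_rfl, Nat.choose_eq_zero_of_lt (by omega)]
            simp
          · simp
      · intro y hy y' hy' hne
        rw [Function.onFun, Finset.disjoint_left]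
        intro h hh hh'
        apply hne
        have h1 := ((hS y hy h).1 hh).top m le_rfl
        have h2 := ((hS y' hy' h).1 hh').top m le_rfl
        funext j
        rw [← hyeq y hy j, ← hyeq y' hy' j, ← h1, ← h2]
      · intro h hh h' hh' heq
        simp only [Finset.coe_biUnion, Set.mem_iUnion, Finset.mem_coe] at hh hh'
        obtain ⟨y, hy, hh⟩ := hh
        obtain ⟨y', hy', hh'⟩ := hh'
        have h1 := (hS y hy h).1 hh
        have h2 := (hS y' hy' h').1 hh'
        funext a
        rcases le_or_gt a m with ha | ha
        · have := congrFun heq a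
          unfold addTop at this
          rwa [if_pos ha, if_pos ha] at this
        · rw [h1.top a ha.le, h2.top a ha.le, ← h1.top m le_rfl, ← h2.top m le_rfl]
          have := congrFun heq m
          unfold addTop at this
          rwa [if_pos le_rfl, if_pos le_rfl] at this

/-! ### The generating function of pairs of tableaux -/

open PowerSeries in
/-- Cauchy–Binet for Hadamard products: the coefficients of the determinant of generating
functions of termwise products. -/
theorem coeff_det_hadamard {n : ℕ} (p q : Fin n → ℕ → ℤ) (M : ℕ) {L : ℕ} (hL : M < L) :
    PowerSeries.coeff M (Matrix.of fun i k : Fin n => PowerSeries.mk fun l => p i l * q k l).det =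
      ∑ s ∈ Finset.univ.filter
          (fun s : Fin n → Fin L => StrictAnti s ∧ ∑ j, (s j : ℕ) = M),
        (Matrix.of fun i j => p i (s j)).det * (Matrix.of fun i j => q i (s j)).det := by
  classical
  set A : Matrix (Fin n) (Fin L)ᵒᵈ (PowerSeries ℤ) :=
    Matrix.of fun i l => PowerSeries.C (p i ((OrderDual.ofDual l : Fin L) : ℕ)) *
      PowerSeries.X ^ ((OrderDual.ofDual l : Fin L) : ℕ) with hA
  set B : Matrix (Fin L)ᵒᵈ (Fin n) (PowerSeries ℤ) :=
    Matrix.of fun l k => PowerSeries.C (q k ((OrderDual.ofDual l : Fin L) : ℕ)) with hB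
  have key : ∀ (x y : ℤ) (a b : ℕ), PowerSeries.coeff a
      (PowerSeries.C x * PowerSeries.X ^ b * PowerSeries.C y) = if a = b then x * y else 0 := by
    intro x y a b
    rw [mul_right_comm, ← map_mul, PowerSeries.coeff_C_mul, PowerSeries.coeff_X_pow]
    split_ifs <;> simp
  have hcoeff : ∀ i k a, a < L → PowerSeries.coeff a ((A * B) i k) = p i a * q k a := by
    intro i k a ha
    rw [Matrix.mul_apply, map_sum]
    rw [Finset.sum_eq_single (OrderDual.toDual (⟨a, ha⟩ : Fin L))]
    · simp only [hA, hB, Matrix.of_apply, key, OrderDual.ofDual_toDual, if_true]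
    · intro b _ hb
      have : a ≠ ((OrderDual.ofDual b : Fin L) : ℕ) := by
        rintro h
        apply hb
        apply OrderDual.ofDual.injective
        exact Fin.ext h.symm
      simp only [hA, hB, Matrix.of_apply, key, this, if_false]
    · simp
  have h1 : PowerSeries.coeff M
      (Matrix.of fun i k : Fin n => PowerSeries.mk fun l => p i l * q k l).det =
      PowerSeries.coeff M (A * B).det := by
    rw [Matrix.det_apply, Matrix.det_apply, map_sum, map_sum]
    refine Finset.sum_congr rfl fun σ _ => ?_
    rw [Units.smul_def, Units.smul_def, map_zsmul, map_zsmul, PowerSeries.coeff_prod,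
      PowerSeries.coeff_prod]
    congr 1
    refine Finset.sum_congr rfl fun l hl => Finset.prod_congr rfl fun i _ => ?_
    rw [hcoeff, Matrix.of_apply, PowerSeries.coeff_mk]
    rw [Finset.mem_finsuppAntidiag] at hl
    have := Finset.single_le_sum (f := fun i => l i) (fun _ _ => Nat.zero_le _)
      (Finset.mem_univ i)
    have h2 : ∑ x, l x = M := hl.1
    omega
  rw [h1, det_mul_cauchyBinet, map_sum]
  have h2 : ∀ s : Fin n → (Fin L)ᵒᵈ, PowerSeries.coeff M
      ((A.submatrix id s).det * (B.submatrix s id).det) =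
      if ∑ j, ((OrderDual.ofDual (s j) : Fin L) : ℕ) = M then
        (Matrix.of fun i j => p i ((OrderDual.ofDual (s j) : Fin L) : ℕ)).det *
        (Matrix.of fun i j => q i ((OrderDual.ofDual (s j) : Fin L) : ℕ)).det else 0 := by
    intro s
    have e1 : (A.submatrix id s).det =
        PowerSeries.C (Matrix.of fun i j => p i ((OrderDual.ofDual (s j) : Fin L) : ℕ)).det *
        PowerSeries.X ^ ∑ j, ((OrderDual.ofDual (s j) : Fin L) : ℕ) := by
      rw [← Finset.prod_pow_eq_pow_sum, mul_comm, RingHom.map_det, ← Matrix.det_mul_row]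
      congr 1
      ext1 i j
      simp [hA, mul_comm]
    have e2 : (B.submatrix s id).det =
        PowerSeries.C (Matrix.of fun i j => q i ((OrderDual.ofDual (s j) : Fin L) : ℕ)).det := by
      rw [← Matrix.det_transpose, RingHom.map_det]
      congr 1
    rw [e1, e2, mul_right_comm, ← map_mul, PowerSeries.coeff_C_mul, PowerSeries.coeff_X_pow]
    split_ifs with h3 h4 h4
    · simp
    · exact absurd h3.symm h4
    · exact absurd h4.symm h3
    · simp
  simp only [h2]
  rw [← Finset.sum_filter, Finset.filter_filter]
  rfl

theorem StrictAnti.le_val {n : ℕ} {s : Fin n → ℕ} (hs : StrictAnti s) (j : Fin n) :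
    n - 1 - j ≤ s j := by
  have : ∀ t (j : Fin n), n - 1 - j = t → t ≤ s j := by
    intro t
    induction t with
    | zero => intro _ _; exact Nat.zero_le _
    | succ t ih =>
      intro j hj
      have h1 := ih ⟨j + 1, by omega⟩ (by simp only; omega)
      have h2 := hs (show j < ⟨j + 1, by omega⟩ from Nat.lt_succ_self _)
      omega
  exact this _ j rfl

theorem unshift_add {n : ℕ} {s : Fin n → ℕ} (hs : StrictAnti s) (j : Fin n) :
    unshift n s j + (n - 1 - j) = s j := by
  have := hs.le_val j
  unfold unshift
  rw [dif_pos j.2]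
  simp only [Fin.eta]
  omega

theorem unshift_antitone {n : ℕ} {s : Fin n → ℕ} (hs : StrictAnti s) :
    Antitone (unshift n s) := by
  refine antitone_nat_of_succ_le fun i => ?_
  by_cases h1 : i + 1 < n
  · have h2 := unshift_add hs ⟨i, by omega⟩
    have h3 := unshift_add hs ⟨i + 1, h1⟩
    have h4 := hs (show (⟨i, by omega⟩ : Fin n) < ⟨i + 1, h1⟩ from Nat.lt_succ_self i)
    simp only at h2 h3
    omega
  · unfold unshift
    rw [dif_neg h1]; exact Nat.zero_le _

theorem unshift_zero {n : ℕ} {s : Fin n → ℕ} {i : ℕ} (hi : n ≤ i) : unshift n s i = 0 := by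
  unfold unshift
  rw [dif_neg (by omega)]

theorem unshift_shift {n : ℕ} {lam : ℕ → ℕ} (h0 : ∀ i, n ≤ i → lam i = 0) :
    unshift n (fun j => lam j + (n - 1 - j)) = lam := by
  funext i
  unfold unshift
  split_ifs with h
  · simp
  · exact (h0 i (by omega)).symm

/-- The generating function, over one part of a shifted partition, of the products of the
entries of the two counting determinants. -/
noncomputable def cauchyEntry (κ κ' c c' : ℕ) : PowerSeries ℤ :=
  PowerSeries.mk fun l => ((l + c).choose κ : ℤ) * ((l + c').choose κ' : ℤ)

/-- The number of pairs of tableaux of the same shape, with given total size. -/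
theorem exists_finset_pairs (n : ℕ) (U V : ℕ → ℕ) (m m' : ℕ)
    (hU : ∀ i j, i < j → j < n → U i < U j) (hUm : ∀ i < n, U i < m)
    (hV : ∀ i j, i < j → j < n → V i < V j) (hVm : ∀ i < n, V i < m') (ℓ : ℕ) :
    ∃ T : Finset ((ℕ → ℕ → ℕ) × (ℕ → ℕ → ℕ)),
      (∀ x, x ∈ T ↔ ∃ lam, IsGT n U m lam x.1 ∧ IsGT n V m' lam x.2 ∧
        ∑ i ∈ Finset.range n, lam i = ℓ) ∧
      (T.card : ℤ) = PowerSeries.coeff (ℓ + ∑ i ∈ Finset.range n, (n - 1 - i))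
        (Matrix.of fun i k : Fin n => cauchyEntry (m - 1 - U i) (m' - 1 - V k)
          (m - 1 - U i - (n - 1 - i)) (m' - 1 - V k - (n - 1 - k))).det := by
  classical
  set C := ∑ i ∈ Finset.range n, (n - 1 - i) with hC
  unfold cauchyEntry
  rw [coeff_det_hadamard
    (fun (i : Fin n) l => ((l + (m - 1 - U i - (n - 1 - i))).choose (m - 1 - U i) : ℤ))
    (fun (k : Fin n) l => ((l + (m' - 1 - V k - (n - 1 - k))).choose (m' - 1 - V k) : ℤ))
    (ℓ + C) (Nat.lt_succ_self _)]
  set P := Finset.univ.filter fun s : Fin n → Fin (ℓ + C + 1) =>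
    StrictAnti s ∧ ∑ j, (s j : ℕ) = ℓ + C with hP
  have hPa : ∀ s ∈ P, StrictAnti fun j => (s j : ℕ) := by
    intro s hs
    rw [hP, Finset.mem_filter] at hs
    exact fun i j hij => hs.2.1 hij
  choose! S hS hScard using fun s (hs : s ∈ P) => exists_finset_isGT m n U hU hUm
    (unshift n fun j => (s j : ℕ)) (unshift_antitone (hPa s hs)) (fun i hi => unshift_zero hi)
  choose! S' hS' hScard' using fun s (hs : s ∈ P) => exists_finset_isGT m' n V hV hVm
    (unshift n fun j => (s j : ℕ)) (unshift_antitone (hPa s hs)) (fun i hi => unshift_zero hi)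
  refine ⟨P.biUnion fun s => S s ×ˢ S' s, fun x => ?_, ?_⟩
  · simp only [Finset.mem_biUnion, Finset.mem_product]
    constructor
    · rintro ⟨s, hs, h1, h2⟩
      refine ⟨_, (hS s hs _).1 h1, (hS' s hs _).1 h2, ?_⟩
      have h3 : ∑ i ∈ Finset.range n, (unshift n (fun j => (s j : ℕ)) i + (n - 1 - i)) =
          ℓ + C := by
        rw [← Fin.sum_univ_eq_sum_range
          (fun i => unshift n (fun j => (s j : ℕ)) i + (n - 1 - i))]
        rw [Finset.sum_congr rfl fun j _ => unshift_add (hPa s hs) j]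
        exact (Finset.mem_filter.mp hs).2.2
      rw [Finset.sum_add_distrib] at h3
      omega
    · rintro ⟨lam, h1, h2, h3⟩
      have hsum : ∑ j : Fin n, (lam j + (n - 1 - j)) = ℓ + C := by
        rw [Fin.sum_univ_eq_sum_range (fun i => lam i + (n - 1 - i)), Finset.sum_add_distrib, h3]
      have hlt : ∀ j : Fin n, lam j + (n - 1 - j) < ℓ + C + 1 := by
        intro j
        have := Finset.single_le_sum (f := fun j : Fin n => lam j + (n - 1 - j))
          (fun _ _ => Nat.zero_le _) (Finset.mem_univ j)
        omega
      have hsP : (fun j : Fin n => (⟨lam j + (n - 1 - j), hlt j⟩ : Fin (ℓ + C + 1))) ∈ P := by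
        rw [hP, Finset.mem_filter]
        refine ⟨Finset.mem_univ _, ?_, hsum⟩
        intro i j hij
        have := h1.lam_anti hij.le
        have h5 : (i : ℕ) < j := hij
        have h6 := j.2
        rw [Fin.lt_def]
        simp only
        omega
      have hu : unshift n (fun j : Fin n => lam j + (n - 1 - j)) = lam :=
        unshift_shift fun i hi => h1.lam_zero hi
      refine ⟨_, hsP, (hS _ hsP _).2 ?_, (hS' _ hsP _).2 ?_⟩
      · simpa only [hu] using h1
      · simpa only [hu] using h2
  · rw [Finset.card_biUnion]
    · rw [Nat.cast_sum]
      refine Finset.sum_congr rfl fun s hs => ?_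
      rw [Finset.card_product, Nat.cast_mul, hScard s hs, hScard' s hs]
      simp only [unshift_add (hPa s hs)]
    · intro s hs s' hs' hne
      rw [Function.onFun, Finset.disjoint_left]
      intro x hx hx'
      apply hne
      rw [Finset.mem_product] at hx hx'
      have h1 := ((hS s hs _).1 hx.1).top m le_rfl
      have h2 := ((hS s' hs' _).1 hx'.1).top m le_rfl
      funext j
      apply Fin.ext
      rw [← unshift_add (hPa s hs) j, ← unshift_add (hPa s' hs') j, ← h1, ← h2]

/-! ### Numerators of products of binomial coefficients -/

/-- `N` is the numerator polynomial of `∑_{l ≥ 0} r(l) z^l` over `(1 - z)^{D+1}`, and its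
reflection is the numerator of `(-1)^D ∑_{y ≥ 1} r(-y) z^y` (the reciprocity law for the
generating function of a polynomial sequence of degree at most `D`). -/
structure IsNumerator (D : ℕ) (r : ℤ → ℤ) (N : Polynomial ℤ) : Prop where
  deg : N.natDegree ≤ D
  gf : (PowerSeries.mk fun l => r l) * (1 - PowerSeries.X) ^ (D + 1) = (N : PowerSeries ℤ)
  rgf : (PowerSeries.mk fun y => if y = 0 then 0 else (-1) ^ D * r (-y)) *
    (1 - PowerSeries.X) ^ (D + 1) = (Polynomial.reflect (D + 1) N : PowerSeries ℤ)

namespace IsNumerator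

theorem add {D : ℕ} {r r' : ℤ → ℤ} {N N' : Polynomial ℤ} (h : IsNumerator D r N)
    (h' : IsNumerator D r' N') : IsNumerator D (fun x => r x + r' x) (N + N') := by
  refine ⟨(Polynomial.natDegree_add_le _ _).trans (max_le h.deg h'.deg), ?_, ?_⟩
  · rw [Polynomial.coe_add, ← h.gf, ← h'.gf, ← add_mul]
    congr 1
  · rw [Polynomial.reflect_add, Polynomial.coe_add, ← h.rgf, ← h'.rgf, ← add_mul]
    congr 1
    ext y
    simp only [PowerSeries.coeff_mk, map_add]
    split_ifs <;> ring

theorem reflect_one_one : Polynomial.reflect 1 (1 : Polynomial ℤ) = Polynomial.X := by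
  rw [Polynomial.reflect_one]; simp

theorem one : IsNumerator 0 (fun _ => 1) 1 := by
  refine ⟨by simp, ?_, ?_⟩
  · ext l
    rw [zero_add, pow_one, mul_sub, mul_one, map_sub, Polynomial.coe_one]
    cases l with
    | zero => simp
    | succ l => simp [PowerSeries.coeff_succ_mul_X, PowerSeries.coeff_one]
  · ext l
    rw [zero_add, pow_one, mul_sub, mul_one, map_sub, reflect_one_one, Polynomial.coe_X]
    cases l with
    | zero => simp
    | succ l =>
      rw [PowerSeries.coeff_succ_mul_X]
      cases l with
      | zero => simp
      | succ l => simp [PowerSeries.coeff_X]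

theorem reflect_one_sub_X_pow (D : ℕ) :
    Polynomial.reflect D ((1 - Polynomial.X : Polynomial ℤ) ^ D) =
      (-1) ^ D * (1 - Polynomial.X) ^ D := by
  have hdeg : (1 - Polynomial.X : Polynomial ℤ).natDegree ≤ 1 := by
    compute_degree
  induction D with
  | zero => simp
  | succ D ih =>
    rw [pow_succ, Polynomial.reflect_mul _ _ ((Polynomial.natDegree_pow_le).trans
      (by nlinarith)) hdeg, ih, Polynomial.reflect_sub, reflect_one_one]
    rw [Polynomial.reflect_one_X]
    ring

/-- Summation: from the differences of a sequence to the sequence. -/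
theorem step {D : ℕ} {r : ℤ → ℤ} {N : Polynomial ℤ}
    (h : IsNumerator D (fun x => r x - r (x - 1)) N) :
    IsNumerator (D + 1) r (N + Polynomial.C (r (-1)) * (1 - Polynomial.X) ^ (D + 1)) := by
  have hdeg : ((1 - Polynomial.X : Polynomial ℤ) ^ (D + 1)).natDegree ≤ D + 1 := by
    refine Polynomial.natDegree_pow_le.trans ?_
    have : (1 - Polynomial.X : Polynomial ℤ).natDegree ≤ 1 := by compute_degree
    nlinarith
  refine ⟨?_, ?_, ?_⟩
  · refine (Polynomial.natDegree_add_le _ _).trans (max_le (by have := h.deg; omega) ?_)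
    exact (Polynomial.natDegree_C_mul_le _ _).trans hdeg
  · have h1 : (PowerSeries.mk fun l : ℕ => r l) * (1 - PowerSeries.X) =
        (PowerSeries.mk fun l : ℕ => r l - r (l - 1)) + PowerSeries.C (r (-1)) := by
      ext l
      rw [mul_sub, mul_one, map_sub, map_add]
      cases l with
      | zero => simp
      | succ l =>
        rw [PowerSeries.coeff_succ_mul_X, PowerSeries.coeff_C, if_neg (Nat.succ_ne_zero l)]
        simp
    rw [pow_succ', ← mul_assoc, h1, add_mul, h.gf]
    push_cast
    rfl
  · have h1 : (PowerSeries.mk fun y : ℕ => if y = 0 then 0 else (-1) ^ (D + 1) * r (-y)) *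
        (1 - PowerSeries.X) =
        PowerSeries.X * (PowerSeries.mk fun y : ℕ => if y = 0 then 0 else
          (-1) ^ D * (r (-y) - r (-y - 1))) +
        PowerSeries.C ((-1) ^ (D + 1) * r (-1)) * PowerSeries.X := by
      ext l
      rw [mul_sub, mul_one, map_sub, map_add]
      cases l with
      | zero => simp
      | succ l =>
        rw [PowerSeries.coeff_succ_mul_X, PowerSeries.coeff_succ_X_mul, PowerSeries.coeff_C_mul,
          PowerSeries.coeff_mk, PowerSeries.coeff_mk, PowerSeries.coeff_mk]
        cases l with
        | zero => simp
        | succ l =>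
          simp only [PowerSeries.coeff_X]
          simp
          ring_nf
    have h2 : Polynomial.reflect (D + 1 + 1) N = Polynomial.X * Polynomial.reflect (D + 1) N := by
      have := Polynomial.reflect_mul (1 : Polynomial ℤ) N (F := 1) (G := D + 1) (by simp)
        (h.deg.trans (by omega))
      rw [one_mul, reflect_one_one, add_comm 1] at this
      exact this
    have h3 : Polynomial.reflect (D + 1 + 1) ((1 - Polynomial.X : Polynomial ℤ) ^ (D + 1)) =
        Polynomial.X * ((-1) ^ (D + 1) * (1 - Polynomial.X) ^ (D + 1)) := by
      have := Polynomial.reflect_mul (1 : Polynomial ℤ) ((1 - Polynomial.X) ^ (D + 1)) (F := 1)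
        (G := D + 1) (by simp) hdeg
      rw [one_mul, reflect_one_one, add_comm 1, reflect_one_sub_X_pow] at this
      exact this
    rw [pow_succ' (1 - PowerSeries.X), ← mul_assoc, h1, add_mul, mul_assoc, h.rgf,
      Polynomial.reflect_add,
      Polynomial.reflect_C_mul, h2, h3]
    push_cast
    simp only [map_mul, map_pow, map_neg,
      map_one]
    ring

/-- The numerator of a product of two binomial coefficients; its value at `1` is positive. -/
theorem exists_choose : ∀ (D κ κ' : ℕ) (c c' : ℤ), κ + κ' = D → ∃ N : Polynomial ℤ,
    IsNumerator D (fun x => Ring.choose (x + c) κ * Ring.choose (x + c') κ') N ∧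
      N.eval 1 = ((κ + κ').choose κ : ℤ) := by
  have key : ∀ (x c : ℤ) (κ : ℕ), Ring.choose (x + c) (κ + 1) =
      Ring.choose (x - 1 + c) (κ + 1) + Ring.choose (x + (c - 1)) κ := by
    intro x c κ
    rw [show x + c = (x + (c - 1)) + 1 by ring, Ring.choose_succ_succ, add_comm,
      show x - 1 + c = x + (c - 1) by ring]
  intro D
  induction D with
  | zero =>
    intro κ κ' c c' h
    obtain ⟨rfl, rfl⟩ : κ = 0 ∧ κ' = 0 := by omega
    exact ⟨1, by simpa [Ring.choose_zero_right] using one, by simp⟩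
  | succ D ih =>
    intro κ κ' c c' h
    have h1 : ((1 : Polynomial ℤ) - Polynomial.X).eval 1 = 0 := by simp
    rcases Nat.eq_zero_or_pos κ with rfl | hκ
    · obtain ⟨κ', rfl⟩ : ∃ k, κ' = k + 1 := ⟨κ' - 1, by omega⟩
      obtain ⟨N, hN, hN1⟩ := ih 0 κ' c (c' - 1) (by omega)
      refine ⟨_, step (N := N) ?_, ?_⟩
      · convert hN using 2 with x
        simp only [Ring.choose_zero_right]
        rw [key x]
        ring
      · simp [hN1]
    · obtain ⟨κ, rfl⟩ : ∃ k, κ = k + 1 := ⟨κ - 1, by omega⟩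
      rcases Nat.eq_zero_or_pos κ' with rfl | hκ'
      · obtain ⟨N, hN, hN1⟩ := ih κ 0 (c - 1) c' (by omega)
        refine ⟨_, step (N := N) ?_, ?_⟩
        · convert hN using 2 with x
          simp only [Ring.choose_zero_right]
          rw [key x]
          ring
        · simp [hN1]
      · obtain ⟨κ', rfl⟩ : ∃ k, κ' = k + 1 := ⟨κ' - 1, by omega⟩
        obtain ⟨N, hN, hN1⟩ := ih (κ + 1) κ' c (c' - 1) (by omega)
        obtain ⟨N', hN', hN1'⟩ := ih κ (κ' + 1) (c - 1) (c' - 1) (by omega)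
        refine ⟨_, step (N := N + N') ?_, ?_⟩
        · convert hN.add hN' using 2 with x
          rw [key x c, key x c', show x + (c' - 1) = x - 1 + c' by ring]
          ring
        · rw [Polynomial.eval_add, Polynomial.eval_add, hN1, hN1', Polynomial.eval_mul,
            Polynomial.eval_pow, h1]
          rw [show κ + 1 + (κ' + 1) = (κ + (κ' + 1)) + 1 by ring, Nat.choose_succ_succ,
            show κ + 1 + κ' = κ + (κ' + 1) by ring]
          push_cast
          ring

end IsNumerator

/-! ### Positivity of binomial determinants -/

/-- The telescoping expansion when all the functions `H i` vanish at the last point. -/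
theorem det_telescope_zero {n : ℕ} (H : Fin n → ℕ → ℤ) (x : Fin (n + 1) → ℕ)
    (hx : ∀ j : Fin n, x j.succ ≤ x j.castSucc) (h0 : ∀ i, H i (x (Fin.last n)) = 0) :
    (Matrix.of fun i j : Fin n => H i (x j.castSucc)).det =
      ∑ y ∈ Fintype.piFinset fun j : Fin n => Finset.Ico (x j.succ) (x j.castSucc),
        (Matrix.of fun i j : Fin n => H i (y j + 1) - H i (y j)).det := by
  rw [← det_telescope H x hx, Matrix.det_succ_column _ (Fin.last n),
    Finset.sum_eq_single (Fin.last n)]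
  · simp only [Matrix.of_apply, Fin.lastCases_last, Fin.succAbove_last]
    rw [← two_mul, pow_mul]
    simp only [neg_one_sq, one_pow, one_mul]
    congr 1
    ext i j
    simp only [Matrix.submatrix_apply, Matrix.of_apply, Fin.lastCases_castSucc]
  · intro i _ hi
    obtain ⟨i, rfl⟩ := Fin.exists_castSucc_eq.mpr hi
    simp only [Matrix.of_apply, Fin.lastCases_castSucc, h0]
    simp
  · simp

theorem strictAnti_of_mem_Ico {n : ℕ} {x : Fin (n + 1) → ℕ} (hx : StrictAnti x) {y : Fin n → ℕ}
    (hy : ∀ j, y j ∈ Finset.Ico (x j.succ) (x j.castSucc)) : StrictAnti y := by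
  intro i j hij
  have h1 := Finset.mem_Ico.mp (hy i)
  have h2 := Finset.mem_Ico.mp (hy j)
  have h3 : x j.castSucc ≤ x i.succ := by
    apply hx.antitone
    exact Fin.succ_le_castSucc_iff.mpr hij
  omega

/-- Nonnegativity of the binomial determinants of the reciprocal series, with the exact criterion
for their positivity: telescoping turns them into sums of determinants of the same kind. -/
theorem det_choose_sub_pos : ∀ (n : ℕ) (κ : ℕ → ℕ) (_ : ∀ i j, i < j → j < n → κ j < κ i)
    (w : Fin n → ℕ) (_ : StrictAnti w) (_ : ∀ j, n ≤ w j + 1),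
    0 ≤ (Matrix.of fun i j : Fin n => ((w j - i).choose (κ i) : ℤ)).det ∧
    (0 < (Matrix.of fun i j : Fin n => ((w j - i).choose (κ i) : ℤ)).det ↔
      ∀ j : Fin n, κ j + j ≤ w j) := by
  intro n
  induction n with
  | zero => intro κ _ w _ _; simp
  | succ n ih =>
    intro κ hκ w hw hwn
    have hpas : ∀ a i k : ℕ, i ≤ a → 0 < k → ((a + 1 - i).choose k : ℤ) - ((a - i).choose k : ℤ) =
        ((a - i).choose (k - 1) : ℤ) := by
      intro a i k hi hk
      obtain ⟨k, rfl⟩ : ∃ l, k = l + 1 := ⟨k - 1, by omega⟩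
      rw [show a + 1 - i = (a - i) + 1 by omega, Nat.choose_succ_succ]
      push_cast
      simp
    induction hk : κ n generalizing κ w with
    | zero =>
      have hκ1 : ∀ i < n, 0 < κ i := fun i hi => by have := hκ i n hi (by omega); omega
      have htel := det_telescope (R := ℤ) (n := n) (fun i x => ((x - i).choose (κ i) : ℤ)) w
        (fun j => (hw (Fin.castSucc_lt_succ (i := j))).le)
      have e1 : (Matrix.of fun i j : Fin (n + 1) => ((w j - i).choose (κ i) : ℤ)) =
          Matrix.of fun i j => Fin.lastCases (motive := fun _ => ℤ) 1
            (fun i' : Fin n => ((w j - i').choose (κ i') : ℤ)) i := by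
        ext i j
        refine Fin.lastCases ?_ (fun i => ?_) i
        · simp [hk]
        · simp
      rw [e1, htel]
      have hy : ∀ y ∈ Fintype.piFinset fun j : Fin n => Finset.Ico (w j.succ) (w j.castSucc),
          StrictAnti y ∧ (∀ j, n ≤ y j) ∧
          (Matrix.of fun i j : Fin n => ((y j + 1 - i).choose (κ i) : ℤ) -
            ((y j - i).choose (κ i) : ℤ)).det =
          (Matrix.of fun i j : Fin n => ((y j - i).choose (κ i - 1) : ℤ)).det := by
        intro y hy
        rw [Fintype.mem_piFinset] at hy
        have hyn : ∀ j, n ≤ y j := fun j => by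
          have := Finset.mem_Ico.mp (hy j)
          have := hwn j.succ
          omega
        refine ⟨strictAnti_of_mem_Ico hw hy, hyn, ?_⟩
        congr 1
        ext i j
        exact hpas _ _ _ (by have := hyn j; omega) (hκ1 i i.2)
      have hih : ∀ y ∈ Fintype.piFinset fun j : Fin n => Finset.Ico (w j.succ) (w j.castSucc), _ :=
        fun y hyP => ih (fun i => κ i - 1) (fun i j hij hj => by
          have := hκ i j hij (by omega)
          have := hκ1 j hj
          omega) y (hy y hyP).1 (fun j => by have := (hy y hyP).2.1 j; omega)
      rw [Finset.sum_congr rfl fun y hyP => (hy y hyP).2.2]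
      refine ⟨Finset.sum_nonneg fun y hyP => (hih y hyP).1, ?_⟩
      rw [Finset.sum_pos_iff_of_nonneg fun y hyP => (hih y hyP).1]
      constructor
      · rintro ⟨y, hyP, hpos⟩ j
        have h1 := (hih y hyP).2.1 hpos
        refine Fin.lastCases ?_ (fun j => ?_) j
        · have := hwn (Fin.last n)
          simp only [Fin.val_last, hk]
          omega
        · have := h1 j
          have h2 := Finset.mem_Ico.mp (Fintype.mem_piFinset.mp hyP j)
          simp only [Fin.val_castSucc]
          omega
      · intro h
        have hmem : (fun j : Fin n => w j.castSucc - 1) ∈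
            Fintype.piFinset fun j : Fin n => Finset.Ico (w j.succ) (w j.castSucc) := by
          rw [Fintype.mem_piFinset]
          intro j
          have := hw (Fin.castSucc_lt_succ (i := j))
          rw [Finset.mem_Ico]
          omega
        refine ⟨_, hmem, (hih _ hmem).2.2 fun j => ?_⟩
        have := h j.castSucc
        have := hκ1 j j.2
        simp only [Fin.val_castSucc] at *
        omega
    | succ t iht =>
      have hκ1 : ∀ i ≤ n, n + 1 ≤ κ i + i ∧ 0 < κ i := by
        intro i hi
        have : ∀ s i, i + s = n → n + 1 ≤ κ i + i ∧ 0 < κ i := by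
          intro s
          induction s with
          | zero =>
            rintro i rfl
            simp only [add_zero] at hk
            omega
          | succ s ihs =>
            intro i hi
            have := ihs (i + 1) (by omega)
            have := hκ i (i + 1) (by omega) (by omega)
            omega
        exact this (n - i) i (by omega)
      set x : Fin (n + 2) → ℕ := Fin.snoc (α := fun _ => ℕ) w n with hx
      have hxc : ∀ j : Fin (n + 1), x j.castSucc = w j := fun j => by
        rw [hx]; exact Fin.snoc_castSucc (α := fun _ => ℕ) _ _ _
      have hxl : x (Fin.last (n + 1)) = n := by
        rw [hx]; exact Fin.snoc_last (α := fun _ => ℕ) _ _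
      have hxle : ∀ j : Fin (n + 1), x j.succ ≤ x j.castSucc := by
        intro j
        refine Fin.lastCases ?_ (fun j => ?_) j
        · rw [Fin.succ_last, hxl, hxc]
          have := hwn (Fin.last n)
          omega
        · rw [Fin.succ_castSucc, hxc, hxc]
          exact (hw (Fin.castSucc_lt_succ (i := j))).le
      have htel := det_telescope_zero (fun (i : Fin (n + 1)) x => ((x - i).choose (κ i) : ℤ)) x
        hxle (fun i => by
          rw [hxl, Nat.choose_eq_zero_of_lt]
          · rfl
          · have := hκ1 i (by omega)
            omega)
      simp only [hxc] at htel
      rw [htel]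
      have hy : ∀ y ∈ Fintype.piFinset fun j : Fin (n + 1) => Finset.Ico (x j.succ) (w j),
          StrictAnti y ∧ (∀ j, n ≤ y j) ∧
          (Matrix.of fun i j : Fin (n + 1) => ((y j + 1 - i).choose (κ i) : ℤ) -
            ((y j - i).choose (κ i) : ℤ)).det =
          (Matrix.of fun i j : Fin (n + 1) => ((y j - i).choose (κ i - 1) : ℤ)).det := by
        intro y hy
        rw [Fintype.mem_piFinset] at hy
        have hyn : ∀ j, n ≤ y j := fun j => by
          have := (Finset.mem_Ico.mp (hy j)).1
          refine le_trans ?_ this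
          refine Fin.lastCases ?_ (fun j => ?_) j
          · rw [Fin.succ_last, hxl]
          · rw [Fin.succ_castSucc, hxc]
            have := hwn j.succ
            omega
        refine ⟨?_, hyn, ?_⟩
        · intro i j hij
          have h1 := Finset.mem_Ico.mp (hy i)
          have h2 := Finset.mem_Ico.mp (hy j)
          have h3 : w j ≤ x i.succ := by
            obtain ⟨i, rfl⟩ := Fin.exists_castSucc_eq.mpr (ne_of_lt (hij.trans_le (Fin.le_last j)))
            rw [Fin.succ_castSucc, hxc]
            exact hw.antitone (Fin.castSucc_lt_iff_succ_le.mp hij)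
          omega
        · congr 1
          ext i j
          exact hpas _ _ _ (by have := hyn j; omega) (hκ1 i (by omega)).2
      have hih : ∀ y ∈ Fintype.piFinset fun j : Fin (n + 1) => Finset.Ico (x j.succ) (w j), _ :=
        fun y hyP => iht (fun i => κ i - 1) (fun i j hij hj => by
          have := hκ i j hij (by omega)
          have := hκ1 j (by omega)
          omega) y (hy y hyP).1 (fun j => by have := (hy y hyP).2.1 j; omega) (by simp [hk])
      rw [Finset.sum_congr rfl fun y hyP => (hy y hyP).2.2]
      refine ⟨Finset.sum_nonneg fun y hyP => (hih y hyP).1, ?_⟩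
      rw [Finset.sum_pos_iff_of_nonneg fun y hyP => (hih y hyP).1]
      constructor
      · rintro ⟨y, hyP, hpos⟩ j
        have := (hih y hyP).2.1 hpos j
        have h2 := Finset.mem_Ico.mp (Fintype.mem_piFinset.mp hyP j)
        omega
      · intro h
        have hmem : (fun j : Fin (n + 1) => w j - 1) ∈
            Fintype.piFinset fun j : Fin (n + 1) => Finset.Ico (x j.succ) (w j) := by
          rw [Fintype.mem_piFinset]
          intro j
          rw [Finset.mem_Ico]
          refine Fin.lastCases ?_ (fun j => ?_) j
          · rw [Fin.succ_last, hxl]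
            have := h (Fin.last n)
            simp only [Fin.val_last, hk] at this
            omega
          · rw [Fin.succ_castSucc, hxc]
            have := hw (Fin.castSucc_lt_succ (i := j))
            omega
        refine ⟨_, hmem, (hih _ hmem).2.2 fun j => ?_⟩
        have := h j
        have := hκ1 j (by omega)
        omega

/-- Positivity of the determinant giving the multiplicity. -/
theorem det_choose_add_pos : ∀ (n : ℕ) (κ : ℕ → ℕ) (_ : ∀ i j, i < j → j < n → κ j < κ i)
    (w : Fin n → ℕ) (_ : StrictAnti w),
    0 < (Matrix.of fun i j : Fin n => ((κ i + w j).choose (κ i) : ℤ)).det := by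
  intro n
  induction n with
  | zero => intro κ _ w _; simp
  | succ n ih =>
    intro κ hκ w hw
    induction hk : κ n generalizing κ w with
    | zero =>
      have hκ1 : ∀ i < n, 0 < κ i := fun i hi => by have := hκ i n hi (by omega); omega
      have htel := det_telescope (R := ℤ) (n := n) (fun i x => ((κ i + x).choose (κ i) : ℤ)) w
        (fun j => (hw (Fin.castSucc_lt_succ (i := j))).le)
      have e1 : (Matrix.of fun i j : Fin (n + 1) => ((κ i + w j).choose (κ i) : ℤ)) =
          Matrix.of fun i j => Fin.lastCases (motive := fun _ => ℤ) 1
            (fun i' : Fin n => ((κ i' + w j).choose (κ i') : ℤ)) i := by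
        ext i j
        refine Fin.lastCases ?_ (fun i => ?_) i
        · simp [hk]
        · simp
      rw [e1, htel]
      refine Finset.sum_pos (fun y hy => ?_) ?_
      · rw [Fintype.mem_piFinset] at hy
        have h2 := ih (fun i => κ i - 1) (fun i j hij hj => by
          have := hκ i j hij (by omega)
          have := hκ1 j hj
          omega) (fun j => y j + 1) (fun i j hij => by
            have := strictAnti_of_mem_Ico hw hy hij
            simpa using this)
        refine h2.trans_eq ?_
        congr 1
        ext i j
        simp only [Matrix.of_apply]
        obtain ⟨k, hk⟩ : ∃ l, κ i = l + 1 := ⟨κ i - 1, by have := hκ1 i i.2; omega⟩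
        rw [hk, show k + 1 + (y j + 1) = (k + 1 + y j) + 1 by ring, Nat.choose_succ_succ,
          show k + 1 - 1 + (y j + 1) = k + 1 + y j by omega]
        push_cast
        simp
      · rw [Fintype.piFinset_nonempty]
        intro j
        rw [Finset.nonempty_Ico]
        exact hw (Fin.castSucc_lt_succ (i := j))
    | succ t iht =>
      have hκ1 : ∀ i ≤ n, 0 < κ i := fun i hi => by
        rcases hi.eq_or_lt with rfl | hi
        · omega
        · have := hκ i n hi (by omega); omega
      set x : Fin (n + 2) → ℕ := Fin.snoc (α := fun _ => ℕ) (fun j => w j + 1) 0 with hx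
      have hxc : ∀ j : Fin (n + 1), x j.castSucc = w j + 1 := fun j => by
        rw [hx]; exact Fin.snoc_castSucc (α := fun _ => ℕ) _ _ _
      have hxl : x (Fin.last (n + 1)) = 0 := by
        rw [hx]; exact Fin.snoc_last (α := fun _ => ℕ) _ _
      have hxlt : ∀ j : Fin (n + 1), x j.succ < x j.castSucc := by
        intro j
        refine Fin.lastCases ?_ (fun j => ?_) j
        · rw [Fin.succ_last, hxl, hxc]
          omega
        · rw [Fin.succ_castSucc, hxc, hxc]
          have := hw (Fin.castSucc_lt_succ (i := j))
          omega
      have htel := det_telescope_zero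
        (fun (i : Fin (n + 1)) x => ((κ i + x - 1).choose (κ i) : ℤ)) x
        (fun j => (hxlt j).le) (fun i => by
          rw [hxl, Nat.choose_eq_zero_of_lt]
          · rfl
          · have := hκ1 i (by omega)
            omega)
      have e1 : (Matrix.of fun i j : Fin (n + 1) => ((κ i + w j).choose (κ i) : ℤ)) =
          (Matrix.of fun i j : Fin (n + 1) => ((κ i + x j.castSucc - 1).choose (κ i) : ℤ)) := by
        ext i j
        simp only [Matrix.of_apply, hxc]
        rfl
      rw [e1, htel]
      refine Finset.sum_pos (fun y hy => ?_) ?_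
      · rw [Fintype.mem_piFinset] at hy
        have h2 := iht (fun i => κ i - 1) (fun i j hij hj => by
          have := hκ i j hij (by omega)
          have := hκ1 j (by omega)
          omega) y (by
            refine strictAnti_of_mem_Ico ?_ hy
            exact Fin.strictAnti_iff_succ_lt.mpr hxlt) (by simp [hk])
        refine h2.trans_eq ?_
        congr 1
        ext i j
        simp only [Matrix.of_apply]
        obtain ⟨k, hk⟩ : ∃ l, κ i = l + 1 := ⟨κ i - 1, by have := hκ1 i (by omega); omega⟩
        rw [hk, show k + 1 + (y j + 1) - 1 = (k + y j) + 1 by omega, Nat.choose_succ_succ,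
          show k + 1 - 1 + y j = k + y j by omega, show k + 1 + y j - 1 = k + y j by omega]
        push_cast
        simp
      · rw [Fintype.piFinset_nonempty]
        intro j
        rw [Finset.nonempty_Ico]
        exact hxlt j

/-! ### The numerator of the generating function -/

theorem reflect_prod {ι : Type*} (s : Finset ι) (D : ι → ℕ) (p : ι → Polynomial ℤ)
    (h : ∀ i ∈ s, (p i).natDegree ≤ D i) :
    Polynomial.reflect (∑ i ∈ s, D i) (∏ i ∈ s, p i) = ∏ i ∈ s, Polynomial.reflect (D i) (p i) := by
  classical
  induction s using Finset.induction_on with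
  | empty => simp
  | insert i s hi ih =>
    rw [Finset.sum_insert hi, Finset.prod_insert hi, Finset.prod_insert hi,
      Polynomial.reflect_mul _ _ (h i (Finset.mem_insert_self i s)),
      ih fun j hj => h j (Finset.mem_insert_of_mem hj)]
    exact (Polynomial.natDegree_prod_le _ _).trans
      (Finset.sum_le_sum fun j hj => h j (Finset.mem_insert_of_mem hj))

theorem reflect_sum {ι : Type*} (s : Finset ι) (D : ℕ) (p : ι → Polynomial ℤ) :
    Polynomial.reflect D (∑ i ∈ s, p i) = ∑ i ∈ s, Polynomial.reflect D (p i) := by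
  classical
  induction s using Finset.induction_on with
  | empty => simp
  | insert i s hi ih =>
    rw [Finset.sum_insert hi, Finset.sum_insert hi, Polynomial.reflect_add, ih]

theorem reflect_det {n : ℕ} (a b : Fin n → ℕ) (N : Matrix (Fin n) (Fin n) (Polynomial ℤ))
    (h : ∀ i k, (N i k).natDegree ≤ a i + b k) :
    Polynomial.reflect (∑ i, (a i + b i)) N.det =
      (Matrix.of fun i k => Polynomial.reflect (a i + b k) (N i k)).det := by
  rw [Matrix.det_apply', Matrix.det_apply', reflect_sum]
  refine Finset.sum_congr rfl fun σ _ => ?_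
  have h1 : ((Equiv.Perm.sign σ : ℤ) : Polynomial ℤ) =
      Polynomial.C ((Equiv.Perm.sign σ : ℤ)) := by simp
  rw [h1, Polynomial.reflect_C_mul]
  congr 1
  have h2 : ∑ i, (a i + b i) = ∑ i, (a (σ i) + b i) := by
    rw [Finset.sum_add_distrib, Finset.sum_add_distrib, Equiv.sum_comp σ a]
  rw [h2, reflect_prod _ _ _ fun i _ => h (σ i) i]
  rfl

theorem natDegree_det_le {n : ℕ} (a b : Fin n → ℕ) (N : Matrix (Fin n) (Fin n) (Polynomial ℤ))
    (h : ∀ i k, (N i k).natDegree ≤ a i + b k) :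
    N.det.natDegree ≤ ∑ i, (a i + b i) := by
  rw [Matrix.det_apply']
  refine Polynomial.natDegree_sum_le_of_forall_le _ _ fun σ _ => ?_
  have h1 : ((Equiv.Perm.sign σ : ℤ) : Polynomial ℤ) =
      Polynomial.C ((Equiv.Perm.sign σ : ℤ)) := by simp
  rw [h1]
  refine (Polynomial.natDegree_C_mul_le _ _).trans ?_
  have h2 : ∑ i, (a i + b i) = ∑ i, (a (σ i) + b i) := by
    rw [Finset.sum_add_distrib, Finset.sum_add_distrib, Equiv.sum_comp σ a]
  rw [h2]
  exact (Polynomial.natDegree_prod_le _ _).trans (Finset.sum_le_sum fun i _ => h (σ i) i)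

theorem det_mul_pow {R : Type*} [CommRing R] {n : ℕ} (x : R) (a b : Fin n → ℕ)
    (F : Matrix (Fin n) (Fin n) R) :
    (Matrix.of fun i k => F i k * x ^ (a i + b k)).det = F.det * x ^ ∑ i, (a i + b i) := by
  have : (Matrix.of fun i k => F i k * x ^ (a i + b k)) =
      Matrix.of fun i k => (x ^ a i) * (Matrix.of fun i k => (x ^ b k) * F i k) i k := by
    ext i k
    simp only [Matrix.of_apply]
    ring
  rw [this, Matrix.det_mul_column, Matrix.det_mul_row, Finset.prod_pow_eq_pow_sum,
    Finset.prod_pow_eq_pow_sum, Finset.sum_add_distrib]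
  ring

theorem coe_det {n : ℕ} (N : Matrix (Fin n) (Fin n) (Polynomial ℤ)) :
    ((N.det : Polynomial ℤ) : PowerSeries ℤ) =
      (Matrix.of fun i k => ((N i k : Polynomial ℤ) : PowerSeries ℤ)).det := by
  have := RingHom.map_det (Polynomial.coeToPowerSeries.ringHom (R := ℤ)) N
  exact this

/-- The numerator for the entries of the counting determinant, in terms of binomial coefficients
of natural numbers. -/
theorem exists_cauchyEntry (κ κ' e e' : ℕ) (he : e ≤ κ) (he' : e' ≤ κ') :
    ∃ N : Polynomial ℤ, N.natDegree ≤ κ + κ' ∧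
      cauchyEntry κ κ' (κ - e) (κ' - e') * (1 - PowerSeries.X) ^ (κ + κ' + 1) =
        (N : PowerSeries ℤ) ∧
      (PowerSeries.mk fun y => (if y = 0 then 0 else ((y + e - 1).choose κ : ℤ)) *
        (if y = 0 then 0 else ((y + e' - 1).choose κ' : ℤ))) *
        (1 - PowerSeries.X) ^ (κ + κ' + 1) = (Polynomial.reflect (κ + κ' + 1) N : PowerSeries ℤ) ∧
      N.eval 1 = ((κ + κ').choose κ : ℤ) := by
  obtain ⟨N, hN, hN1⟩ := IsNumerator.exists_choose (κ + κ') κ κ' ((κ - e : ℕ) : ℤ)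
    ((κ' - e' : ℕ) : ℤ) rfl
  have key : ∀ (k e y : ℕ), e ≤ k → y ≠ 0 → Ring.choose (-(y : ℤ) + ((k - e : ℕ) : ℤ)) k =
      (-1) ^ k * ((y + e - 1).choose k : ℤ) := by
    intro k e y he hy
    rw [show -(y : ℤ) + ((k - e : ℕ) : ℤ) = -((y : ℤ) - ((k - e : ℕ) : ℤ)) by ring,
      Ring.choose_neg, show (y : ℤ) - ((k - e : ℕ) : ℤ) + k - 1 = ((y + e - 1 : ℕ) : ℤ) by omega]
    rw [Ring.choose_natCast, Units.smul_def, smul_eq_mul]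
    rfl
  refine ⟨N, hN.deg, ?_, ?_, hN1⟩
  · rw [← hN.gf]
    congr 1
    ext l
    simp only [cauchyEntry, PowerSeries.coeff_mk]
    rw [← Nat.cast_add, ← Nat.cast_add, Ring.choose_natCast, Ring.choose_natCast]
  · rw [← hN.rgf]
    congr 1
    ext y
    simp only [PowerSeries.coeff_mk]
    split_ifs with hy
    · simp
    · rw [key κ e y he hy, key κ' e' y he' hy, pow_add]
      have h1 : ((-1 : ℤ) ^ κ) * (-1) ^ κ = 1 := by rw [← mul_pow]; simp
      have h2 : ((-1 : ℤ) ^ κ') * (-1) ^ κ' = 1 := by rw [← mul_pow]; simp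
      linear_combination (-((y + e - 1).choose κ : ℤ) * ((y + e' - 1).choose κ' : ℤ)) * h1 *
        ((-1 : ℤ) ^ κ') * (-1) ^ κ' - ((y + e - 1).choose κ : ℤ) * ((y + e' - 1).choose κ' : ℤ) * h2

/-- Only the sequences `s` with `κ j + j + 2 ≤ s j + n` contribute to the reciprocal series. -/
theorem det_reciprocal_pos {n : ℕ} (κ : ℕ → ℕ) (hκ : ∀ i j, i < j → j < n → κ j < κ i)
    (s : Fin n → ℕ) (hs : StrictAnti s) :
    0 ≤ (Matrix.of fun i j : Fin n =>
      (if s j = 0 then 0 else ((s j + (n - 1 - i) - 1).choose (κ i) : ℤ))).det ∧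
    (0 < (Matrix.of fun i j : Fin n =>
      (if s j = 0 then 0 else ((s j + (n - 1 - i) - 1).choose (κ i) : ℤ))).det ↔
      ∀ j : Fin n, 1 ≤ s j ∧ κ j + j + 2 ≤ s j + n) := by
  by_cases h : ∀ j, 1 ≤ s j
  · have e1 : (Matrix.of fun i j : Fin n =>
        (if s j = 0 then 0 else ((s j + (n - 1 - i) - 1).choose (κ i) : ℤ))) =
        Matrix.of fun i j : Fin n => ((s j + n - 2 - i).choose (κ i) : ℤ) := by
      ext i j
      have := h j
      simp only [Matrix.of_apply]
      rw [if_neg (by omega), show s j + (n - 1 - i) - 1 = s j + n - 2 - i by omega]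
    rw [e1]
    have h2 := det_choose_sub_pos n κ hκ (fun j => s j + n - 2) (fun i j hij => by
      have := hs hij
      have := h j
      simp only
      omega) (fun j => by have := h j; have := j.2; omega)
    refine ⟨h2.1, h2.2.trans (forall_congr' fun j => ?_)⟩
    have := h j
    have := j.2
    omega
  · push Not at h
    obtain ⟨j, hj⟩ := h
    have hj0 : s j = 0 := by omega
    have h0 : (Matrix.of fun i j : Fin n =>
        (if s j = 0 then 0 else ((s j + (n - 1 - i) - 1).choose (κ i) : ℤ))).det = 0 :=
      Matrix.det_eq_zero_of_column_eq_zero j fun i => by simp [hj0]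
    rw [h0]
    refine ⟨le_rfl, ⟨fun h => absurd h (lt_irrefl _), fun h => ?_⟩⟩
    have := (h j).1
    omega

theorem le_of_strictDecr {n : ℕ} {κ : ℕ → ℕ} (hκ : ∀ i j, i < j → j < n → κ j < κ i) (i : ℕ)
    (hi : i < n) : n - 1 - i ≤ κ i := by
  have : StrictAnti fun j : Fin n => κ j := fun i j hij => hκ i j hij j.2
  exact this.le_val ⟨i, hi⟩

/-- The generating function of pairs of tableaux is a rational function, whose numerator does not
vanish at `1` and has its degree given by the least strictly decreasing sequence `y`
contributing to the reciprocal series. -/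
theorem exists_numerator {n : ℕ} (κ κ' : ℕ → ℕ) (hκ : ∀ i j, i < j → j < n → κ j < κ i)
    (hκ' : ∀ i j, i < j → j < n → κ' j < κ' i) (y : Fin n → ℕ) (hy : StrictAnti y)
    (hy1 : ∀ j : Fin n, 1 ≤ y j ∧ κ j + j + 2 ≤ y j + n ∧ κ' j + j + 2 ≤ y j + n)
    (hmin : ∀ s : Fin n → ℕ, StrictAnti s →
      (∀ j : Fin n, 1 ≤ s j ∧ κ j + j + 2 ≤ s j + n ∧ κ' j + j + 2 ≤ s j + n) →
      ∀ j, y j ≤ s j) :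
    ∃ H : Polynomial ℤ, H.eval 1 ≠ 0 ∧
      (Matrix.of fun i k : Fin n => cauchyEntry (κ i) (κ' k)
          (κ i - (n - 1 - i)) (κ' k - (n - 1 - k))).det *
        (1 - PowerSeries.X) ^ (∑ i : Fin n, (κ i + 1 + κ' i)) =
        PowerSeries.X ^ (∑ i ∈ Finset.range n, (n - 1 - i)) * (H : PowerSeries ℤ) ∧
      H.natDegree + ∑ i ∈ Finset.range n, (n - 1 - i) + ∑ j, y j =
        ∑ i : Fin n, (κ i + 1 + κ' i) := by
  choose N hNdeg hN hNr hN1 using fun i k : Fin n => exists_cauchyEntry (κ i) (κ' k) (n - 1 - i)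
    (n - 1 - k) (le_of_strictDecr hκ i i.2) (le_of_strictDecr hκ' k k.2)
  set Nm : Matrix (Fin n) (Fin n) (Polynomial ℤ) := Matrix.of N with hNm
  set d := ∑ i : Fin n, (κ i + 1 + κ' i) with hd
  set C := ∑ i ∈ Finset.range n, (n - 1 - i) with hC
  set F := (Matrix.of fun i k : Fin n => cauchyEntry (κ i) (κ' k)
          (κ i - (n - 1 - i)) (κ' k - (n - 1 - k))) with hF
  have hdeg : ∀ i k : Fin n, (Nm i k).natDegree ≤ (κ i + 1) + κ' k := fun i k =>
    (hNdeg i k).trans (by omega)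
  have hNF : (Nm.det : PowerSeries ℤ) = F.det * (1 - PowerSeries.X) ^ d := by
    rw [coe_det, hd, ← det_mul_pow (1 - PowerSeries.X) (fun i : Fin n => κ i + 1)
      (fun i : Fin n => κ' i)]
    congr 1
    ext1 i k
    simp only [Matrix.of_apply, hNm, hF]
    rw [← hN i k]
    ring
  set Fr := (Matrix.of fun i k : Fin n => PowerSeries.mk fun y =>
    (if y = 0 then 0 else ((y + (n - 1 - i) - 1).choose (κ i) : ℤ)) *
        (if y = 0 then 0 else ((y + (n - 1 - k) - 1).choose (κ' k) : ℤ))) with hFr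
  have hNFr : (Polynomial.reflect d Nm.det : PowerSeries ℤ) =
      Fr.det * (1 - PowerSeries.X) ^ d := by
    rw [hd, reflect_det (fun i : Fin n => κ i + 1) (fun i : Fin n => κ' i) Nm hdeg, coe_det,
      ← det_mul_pow (1 - PowerSeries.X) (fun i : Fin n => κ i + 1)
      (fun i : Fin n => κ' i)]
    congr 1
    ext1 i k
    simp only [Matrix.of_apply, hNm, hFr]
    rw [show κ i + 1 + κ' k = κ i + κ' k + 1 by ring, ← hNr i k]
  -- strictly decreasing sequences of length `n` have sum at least `C`
  have hFC : PowerSeries.X ^ C ∣ F.det := by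
    rw [PowerSeries.X_pow_dvd_iff]
    intro M hM
    rw [hF]
    unfold cauchyEntry
    rw [coeff_det_hadamard
      (fun (i : Fin n) l => ((l + (κ i - (n - 1 - i))).choose (κ i) : ℤ))
      (fun (k : Fin n) l => ((l + (κ' k - (n - 1 - k))).choose (κ' k) : ℤ)) M
      (Nat.lt_succ_self M)]
    rw [Finset.filter_false_of_mem, Finset.sum_empty]
    rintro s - ⟨hs, hsum⟩
    have h1 : C ≤ ∑ j, (s j : ℕ) := by
      rw [hC, ← Fin.sum_univ_eq_sum_range (fun i => n - 1 - i)]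
      have hs' : StrictAnti fun j => (s j : ℕ) := fun i j hij => hs hij
      exact Finset.sum_le_sum fun j _ => hs'.le_val j
    omega
  have hNC : Polynomial.X ^ C ∣ Nm.det := by
    rw [Polynomial.X_pow_dvd_iff]
    intro M hM
    have h1 : PowerSeries.X ^ C ∣ (Nm.det : PowerSeries ℤ) := by
      rw [hNF]; exact hFC.mul_right _
    have := PowerSeries.X_pow_dvd_iff.mp h1 M hM
    rwa [Polynomial.coeff_coe] at this
  obtain ⟨H, hH⟩ := hNC
  -- the entries take binomial values at `1`, so their determinant is positive there
  have heval : Nm.det.eval 1 ≠ 0 := by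
    have h1 := RingHom.map_det (Polynomial.evalRingHom (1 : ℤ)) Nm
    rw [Polynomial.coe_evalRingHom] at h1
    rw [h1]
    refine ne_of_gt (lt_of_lt_of_eq (det_choose_add_pos n κ hκ (fun k => κ' k)
      fun i j hij => hκ' i j hij j.2) ?_)
    congr 1
    ext i k
    simp [hNm, hN1]
  -- the reciprocal series starts at `∑ j, y j`, which is the drop of the degree of `Nm.det`
  -- below `d`
  have hcoeff := fun M => coeff_det_hadamard
    (fun (i : Fin n) y => if y = 0 then 0 else ((y + (n - 1 - i) - 1).choose (κ i) : ℤ))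
    (fun (k : Fin n) y => if y = 0 then 0 else ((y + (n - 1 - k) - 1).choose (κ' k) : ℤ)) M
    (Nat.lt_succ_self M)
  have hlow : ∀ M < ∑ j, y j, PowerSeries.coeff M Fr.det = 0 := by
    intro M hM
    rw [hFr, hcoeff]
    refine Finset.sum_eq_zero fun s hs => ?_
    rw [Finset.mem_filter] at hs
    have hs' : StrictAnti fun j => (s j : ℕ) := fun i j hij => hs.2.1 hij
    have h1 := det_reciprocal_pos κ hκ _ hs'
    have h2 := det_reciprocal_pos κ' hκ' _ hs'
    by_contra hne
    have h3 := h1.2.1 (lt_of_le_of_ne h1.1 (Ne.symm (left_ne_zero_of_mul hne)))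
    have h4 := h2.2.1 (lt_of_le_of_ne h2.1 (Ne.symm (right_ne_zero_of_mul hne)))
    have h5 := Finset.sum_le_sum fun j (_ : j ∈ Finset.univ) =>
      hmin _ hs' (fun j => ⟨(h3 j).1, (h3 j).2, (h4 j).2⟩) j
    have := hs.2.2
    omega
  have hYpos : 0 < PowerSeries.coeff (∑ j, y j) Fr.det := by
    rw [hFr, hcoeff]
    have hyl : ∀ j, y j < ∑ j, y j + 1 := fun j => Nat.lt_succ_of_le
      (Finset.single_le_sum (f := y) (fun _ _ => Nat.zero_le _) (Finset.mem_univ j))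
    refine Finset.sum_pos' (fun s hs => ?_) ⟨fun j => ⟨y j, hyl j⟩, ?_, ?_⟩
    · rw [Finset.mem_filter] at hs
      have hs' : StrictAnti fun j => (s j : ℕ) := fun i j hij => hs.2.1 hij
      exact mul_nonneg (det_reciprocal_pos κ hκ _ hs').1 (det_reciprocal_pos κ' hκ' _ hs').1
    · rw [Finset.mem_filter]
      exact ⟨Finset.mem_univ _, fun i j hij => hy hij, rfl⟩
    · exact mul_pos ((det_reciprocal_pos κ hκ _ hy).2.2 fun j => ⟨(hy1 j).1, (hy1 j).2.1⟩)
        ((det_reciprocal_pos κ' hκ' _ hy).2.2 fun j => ⟨(hy1 j).1, (hy1 j).2.2⟩)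
  have hrlow : ∀ M < ∑ j, y j, (Polynomial.reflect d Nm.det).coeff M = 0 := by
    intro M hM
    have h1 : PowerSeries.X ^ (∑ j, y j) ∣ (Polynomial.reflect d Nm.det : PowerSeries ℤ) := by
      rw [hNFr]
      exact (PowerSeries.X_pow_dvd_iff.mpr hlow).mul_right _
    have := PowerSeries.X_pow_dvd_iff.mp h1 M hM
    rwa [Polynomial.coeff_coe] at this
  have hrY : (Polynomial.reflect d Nm.det).coeff (∑ j, y j) ≠ 0 := by
    obtain ⟨G, hG⟩ := PowerSeries.X_pow_dvd_iff.mpr hlow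
    rw [← Polynomial.coeff_coe, hNFr]
    rw [hG] at hYpos ⊢
    rw [mul_assoc, PowerSeries.coeff_X_pow_mul', if_pos le_rfl, Nat.sub_self] at *
    simp at hYpos ⊢
    exact hYpos.ne'
  have hNd : Nm.det.natDegree ≤ d := natDegree_det_le _ _ _ hdeg
  rw [Polynomial.coeff_reflect] at hrY
  have hYd : ∑ j, y j ≤ d := by
    by_contra hlt
    rw [Polynomial.revAt_eq_self_of_lt (by omega)] at hrY
    exact hrY (Polynomial.coeff_eq_zero_of_natDegree_lt (by omega))
  rw [Polynomial.revAt_le hYd] at hrY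
  have hNdeg : Nm.det.natDegree = d - ∑ j, y j := by
    refine le_antisymm ?_ (Polynomial.le_natDegree_of_ne_zero hrY)
    rw [Polynomial.natDegree_le_iff_coeff_eq_zero]
    intro M hM
    by_cases hMd : M ≤ d
    · have := hrlow (d - M) (by omega)
      rwa [Polynomial.coeff_reflect, Polynomial.revAt_le (by omega),
        show d - (d - M) = M by omega] at this
    · exact Polynomial.coeff_eq_zero_of_natDegree_lt (by omega)
  have hH1 : H.eval 1 ≠ 0 := by
    rw [hH] at heval
    simpa using heval
  refine ⟨H, hH1, ?_, ?_⟩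
  · rw [← hNF, hH]
    push_cast
    rfl
  · have hH0 : H ≠ 0 := by rintro rfl; simp at hH1
    rw [hH, Polynomial.natDegree_mul (pow_ne_zero _ Polynomial.X_ne_zero) hH0,
      Polynomial.natDegree_X_pow] at hNdeg
    omega

/-! ### The degree of the numerator for a bivector -/

/-- The rational function attached to a bivector, with the degree of its numerator. -/
theorem exists_numerator_bivector (A B n : ℕ)
    (u v : ℕ → ℕ)
    (hu_mono : ∀ i j, 1 ≤ i → i < j → j ≤ n → u i < u j)
    (hv_mono : ∀ i j, 1 ≤ i → i < j → j ≤ n → v i < v j)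
    (hu_range : ∀ i, 1 ≤ i → i ≤ n → 1 ≤ u i ∧ u i ≤ A + 1)
    (hv_range : ∀ i, 1 ≤ i → i ≤ n → 1 ≤ v i ∧ v i ≤ B + 1)
    (d : ℕ)
    (hd : (d : ℤ) = ((A : ℤ) + (B : ℤ) + 3) * n -
      ∑ i ∈ Finset.Icc 1 n, ((u i : ℤ) + (v i : ℤ))) :
    ∃ H : Polynomial ℤ, H.eval 1 ≠ 0 ∧
      (Matrix.of fun i k : Fin n => cauchyEntry (A + 1 - 1 - (u (i + 1) - 1))
          (B + 1 - 1 - (v (k + 1) - 1)) (A + 1 - 1 - (u (i + 1) - 1) - (n - 1 - i))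
          (B + 1 - 1 - (v (k + 1) - 1) - (n - 1 - k))).det *
        (1 - PowerSeries.X) ^ d =
        PowerSeries.X ^ (∑ i ∈ Finset.range n, (n - 1 - i)) * (H : PowerSeries ℤ) ∧
      (H.natDegree : ℤ) - (d : ℤ) =
        (∑ i ∈ Finset.Icc 1 n, sInf
          ({z : ℤ | ∃ j, 1 ≤ j ∧ j ≤ i ∧
              z = (B : ℤ) + (u (n - j + 1) : ℤ) - 1 - 2 * ((i : ℤ) - (j : ℤ))} ∪
            {z : ℤ | ∃ j, 1 ≤ j ∧ j ≤ i ∧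
              z = (A : ℤ) + (v (n - j + 1) : ℤ) - 1 - 2 * ((i : ℤ) - (j : ℤ))})) -
        ((A : ℤ) + (B : ℤ) + 1) * n := by
  set S : ℕ → Set ℤ := fun i => ({z : ℤ | ∃ j, 1 ≤ j ∧ j ≤ i ∧
              z = (B : ℤ) + (u (n - j + 1) : ℤ) - 1 - 2 * ((i : ℤ) - (j : ℤ))} ∪
            {z : ℤ | ∃ j, 1 ≤ j ∧ j ≤ i ∧
              z = (A : ℤ) + (v (n - j + 1) : ℤ) - 1 - 2 * ((i : ℤ) - (j : ℤ))}) with hS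
  set κ : ℕ → ℕ := fun i => A + 1 - 1 - (u (i + 1) - 1) with hκ
  set κ' : ℕ → ℕ := fun i => B + 1 - 1 - (v (i + 1) - 1) with hκ'
  have hκu : ∀ i < n, (κ i : ℤ) = A + 1 - u (i + 1) := fun i hi => by
    have := hu_range (i + 1) (by omega) (by omega)
    simp only [hκ]
    omega
  have hκv : ∀ i < n, (κ' i : ℤ) = B + 1 - v (i + 1) := fun i hi => by
    have := hv_range (i + 1) (by omega) (by omega)
    simp only [hκ']
    omega
  have hT : ∀ j < n, (∃ l, j ≤ l ∧ l < n ∧ (sInf (S (n - j)) = A + B - κ l - 2 * ((l : ℤ) - j) ∨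
      sInf (S (n - j)) = A + B - κ' l - 2 * ((l : ℤ) - j))) ∧
      (∀ l, j ≤ l → l < n → sInf (S (n - j)) ≤ A + B - κ l - 2 * ((l : ℤ) - j) ∧
        sInf (S (n - j)) ≤ A + B - κ' l - 2 * ((l : ℤ) - j)) := by
    intro j hj
    have hbdd : BddBelow (S (n - j)) := by
      refine ⟨-2 * n, ?_⟩
      rintro z (⟨k, hk1, hk2, rfl⟩ | ⟨k, hk1, hk2, rfl⟩)
      · have := hu_range (n - k + 1) (by omega) (by omega)
        omega
      · have := hv_range (n - k + 1) (by omega) (by omega)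
        omega
    have hne : (S (n - j)).Nonempty := ⟨_, Or.inl ⟨1, le_rfl, by omega, rfl⟩⟩
    constructor
    · rcases Int.csInf_mem hne hbdd with ⟨k, hk1, hk2, hk⟩ | ⟨k, hk1, hk2, hk⟩
      · refine ⟨n - k, by omega, by omega, Or.inl ?_⟩
        rw [hk, hκu (n - k) (by omega)]
        omega
      · refine ⟨n - k, by omega, by omega, Or.inr ?_⟩
        rw [hk, hκv (n - k) (by omega)]
        omega
    · intro l hl hln
      constructor
      · refine csInf_le hbdd (Or.inl ⟨n - l, by omega, by omega, ?_⟩)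
        rw [hκu l hln, show n - (n - l) = l by omega]
        omega
      · refine csInf_le hbdd (Or.inr ⟨n - l, by omega, by omega, ?_⟩)
        rw [hκv l hln, show n - (n - l) = l by omega]
        omega
  -- the least strictly decreasing sequence above the bounds: `y j` is the maximum, over `l ≥ j`,
  -- of the bound at `l` plus `l - j`
  set y : Fin n → ℕ := fun j => (A + B - sInf (S (n - j)) + j + 2 - n).toNat with hy
  have hy1 : ∀ j : Fin n, ((y j : ℕ) : ℤ) = A + B - sInf (S (n - j)) + j + 2 - n := by
    intro j
    rw [hy]
    apply Int.toNat_of_nonneg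
    have hjn := j.2
    have := ((hT j hjn).2 (n - 1) (by omega) (by omega)).1
    omega
  have hκd : ∀ i j, i < j → j < n → κ j < κ i := fun i j hij hj => by
    have := hκu i (by omega)
    have := hκu j hj
    have := hu_mono (i + 1) (j + 1) (by omega) (by omega) (by omega)
    omega
  have hκd' : ∀ i j, i < j → j < n → κ' j < κ' i := fun i j hij hj => by
    have := hκv i (by omega)
    have := hκv j hj
    have := hv_mono (i + 1) (j + 1) (by omega) (by omega) (by omega)
    omega
  obtain ⟨H, hH1, hH2, hH3⟩ := exists_numerator (n := n) κ κ' hκd hκd' y (by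
      cases n with
      | zero => intro i; exact i.elim0
      | succ n =>
        rw [Fin.strictAnti_iff_succ_lt]
        intro j
        have h1 := hy1 j.succ
        have h2 := hy1 j.castSucc
        obtain ⟨l, hl, hln, h3⟩ := (hT j.succ j.succ.2).1
        have h4 := (hT j.castSucc j.castSucc.2).2 l
          (by simp only [Fin.val_succ, Fin.val_castSucc] at *; omega) hln
        simp only [Fin.val_succ, Fin.val_castSucc] at *
        omega) (by
      intro j
      have h1 := hy1 j
      have h2 := (hT j j.2).2 j le_rfl j.2
      have hjn := j.2
      have h3 := (hT j hjn).2 (n - 1) (by omega) (by omega)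
      omega) (by
      intro s hs hf j
      have h1 := hy1 j
      obtain ⟨l, hl, hln, h3⟩ := (hT j j.2).1
      have h4 := hf ⟨l, hln⟩
      have h5 : ∀ (t : ℕ) (l : ℕ) (hl : l < n), j + t = l → s ⟨l, hl⟩ + t ≤ s j := by
        intro t
        induction t with
        | zero => rintro l hl rfl; simp
        | succ t ih =>
          rintro l hl rfl
          have h6 := ih (j + t) (by omega) rfl
          have h7 := hs (show (⟨j + t, by omega⟩ : Fin n) < ⟨j + (t + 1), hl⟩ from
            Nat.lt_succ_self _)
          omega
      have h8 := h5 (l - j) l hln (by omega)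
      simp only at h4
      omega)
  have hIcc : ∀ f : ℕ → ℤ, ∑ i ∈ Finset.Icc 1 n, f i = ∑ j : Fin n, f (j + 1) := by
    intro f
    rw [Fin.sum_univ_eq_sum_range (fun j => f (j + 1)), Finset.range_eq_Ico,
      Finset.sum_Ico_add' (fun j => f j) 0 n 1]
    rfl
  have hdd : d = ∑ i : Fin n, (κ i + 1 + κ' i) := by
    have h1 : ((∑ i : Fin n, (κ i + 1 + κ' i) : ℕ) : ℤ) = ∑ i : Fin n,
        (((A : ℤ) + B + 3) - ((u (i + 1) : ℤ) + (v (i + 1) : ℤ))) := by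
      rw [Nat.cast_sum]
      refine Finset.sum_congr rfl fun i _ => ?_
      push_cast
      rw [hκu i i.2, hκv i i.2]
      ring
    zify
    push_cast at h1
    rw [hd, hIcc (fun i => (u i : ℤ) + (v i : ℤ)), h1, Finset.sum_sub_distrib]
    simp [mul_comm]
  refine ⟨H, hH1, ?_, ?_⟩
  · rw [hdd]
    exact hH2
  · have hsum : ∑ i ∈ Finset.Icc 1 n, sInf (S i) = ∑ j : Fin n, sInf (S (n - j)) := by
      rw [hIcc, ← Equiv.sum_comp Fin.revPerm]
      refine Finset.sum_congr rfl fun j _ => ?_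
      rw [Fin.revPerm_apply, Fin.val_rev]
      congr 2
      omega
    rw [hsum]
    have h1 : ∑ i ∈ Finset.range n, (n - 1 - i) = ∑ j : Fin n, (n - 1 - (j : ℕ)) :=
      (Fin.sum_univ_eq_sum_range (fun i => n - 1 - i) n).symm
    rw [h1, ← hdd] at hH3
    have h2 : (∑ j : Fin n, ((n - 1 - (j : ℕ) : ℕ) : ℤ)) + ∑ j : Fin n, (y j : ℤ) =
        ((A : ℤ) + B + 1) * n - ∑ j : Fin n, sInf (S (n - j)) := by
      rw [← Finset.sum_add_distrib]
      have : ∀ j : Fin n, ((n - 1 - (j : ℕ) : ℕ) : ℤ) + (y j : ℤ) =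
          (A : ℤ) + B + 1 - sInf (S (n - j)) := fun j => by
        have := hy1 j
        have := j.2
        omega
      rw [Finset.sum_congr rfl fun j _ => this j, Finset.sum_sub_distrib]
      simp [mul_comm]
    zify at hH3
    linarith

/-! ### Leading monomials of minors -/

open MvPolynomial in
/-- `e` is the unique monomial of largest weight of `p`, and it has coefficient `1`. -/
def IsLead {τ K : Type*} [Field K] (w : τ → ℕ) (p : MvPolynomial τ K) (e : τ →₀ ℕ) : Prop :=
  MvPolynomial.coeff e p = 1 ∧ ∀ f, f ≠ e → MvPolynomial.coeff f p ≠ 0 →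
    Finsupp.weight w f < Finsupp.weight w e

/-- All the monomials of `p` have weight smaller than `N`. -/
def IsLow {τ K : Type*} [Field K] (w : τ → ℕ) (p : MvPolynomial τ K) (N : ℕ) : Prop :=
  ∀ f, MvPolynomial.coeff f p ≠ 0 → Finsupp.weight w f < N

section Lead

variable {τ K : Type*} [Field K] {w : τ → ℕ}

theorem isLead_one : IsLead w (1 : MvPolynomial τ K) 0 := by
  classical
  refine ⟨by simp, fun f hf h => ?_⟩
  rw [MvPolynomial.coeff_one, if_neg (Ne.symm hf)] at h
  exact absurd rfl h

theorem IsLead.weight_le {p : MvPolynomial τ K} {e f : τ →₀ ℕ} (h : IsLead w p e)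
    (hf : MvPolynomial.coeff f p ≠ 0) : Finsupp.weight w f ≤ Finsupp.weight w e := by
  by_cases h1 : f = e
  · rw [h1]
  · exact (h.2 f h1 hf).le

theorem IsLead.mul {p q : MvPolynomial τ K} {e f : τ →₀ ℕ} (hp : IsLead w p e)
    (hq : IsLead w q f) : IsLead w (p * q) (e + f) := by
  classical
  have key : ∀ x : (τ →₀ ℕ) × (τ →₀ ℕ), x ≠ (e, f) →
      MvPolynomial.coeff x.1 p * MvPolynomial.coeff x.2 q ≠ 0 →
      Finsupp.weight w (x.1 + x.2) < Finsupp.weight w (e + f) := by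
    rintro ⟨a, b⟩ hx h
    have h1 := left_ne_zero_of_mul h
    have h2 := right_ne_zero_of_mul h
    rw [map_add, map_add]
    by_cases ha : a = e
    · have hb : b ≠ f := fun hb => hx (by rw [ha, hb])
      exact add_lt_add_of_le_of_lt (hp.weight_le h1) (hq.2 b hb h2)
    · exact add_lt_add_of_lt_of_le (hp.2 a ha h1) (hq.weight_le h2)
  constructor
  · rw [MvPolynomial.coeff_mul, Finset.sum_eq_single (e, f)]
    · simp [hp.1, hq.1]
    · intro x hx hne
      by_contra h
      have := key x hne h
      rw [Finset.HasAntidiagonal.mem_antidiagonal.mp hx] at this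
      exact lt_irrefl _ this
    · simp
  · intro g hg h
    rw [MvPolynomial.coeff_mul] at h
    obtain ⟨x, hx, h2⟩ := Finset.exists_ne_zero_of_sum_ne_zero h
    rw [Finset.HasAntidiagonal.mem_antidiagonal] at hx
    rw [← hx]
    refine key x ?_ h2
    rintro rfl
    exact hg hx.symm

theorem IsLead.prod {ι : Type*} (s : Finset ι) (p : ι → MvPolynomial τ K) (e : ι → τ →₀ ℕ)
    (h : ∀ i ∈ s, IsLead w (p i) (e i)) : IsLead w (∏ i ∈ s, p i) (∑ i ∈ s, e i) := by
  classical
  induction s using Finset.induction_on with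
  | empty => exact isLead_one
  | insert i s hi ih =>
    rw [Finset.prod_insert hi, Finset.sum_insert hi]
    exact (h i (Finset.mem_insert_self i s)).mul
      (ih fun j hj => h j (Finset.mem_insert_of_mem hj))

theorem IsLow.sum {ι : Type*} {s : Finset ι} {p : ι → MvPolynomial τ K} {N : ℕ}
    (h : ∀ i ∈ s, IsLow w (p i) N) : IsLow w (∑ i ∈ s, p i) N := by
  intro f hf
  rw [MvPolynomial.coeff_sum] at hf
  obtain ⟨i, hi, h2⟩ := Finset.exists_ne_zero_of_sum_ne_zero hf
  exact h i hi f h2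

theorem IsLow.mul {p q : MvPolynomial τ K} {N N' : ℕ} (hp : IsLow w p N) (hq : IsLow w q N') :
    IsLow w (p * q) (N + N') := by
  classical
  intro f hf
  rw [MvPolynomial.coeff_mul] at hf
  obtain ⟨x, hx, h2⟩ := Finset.exists_ne_zero_of_sum_ne_zero hf
  rw [← Finset.HasAntidiagonal.mem_antidiagonal.mp hx, map_add]
  exact add_lt_add (hp _ (left_ne_zero_of_mul h2)) (hq _ (right_ne_zero_of_mul h2))

theorem IsLead.add_low {p q : MvPolynomial τ K} {e : τ →₀ ℕ} (hp : IsLead w p e)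
    (hq : IsLow w q (Finsupp.weight w e)) : IsLead w (p + q) e := by
  constructor
  · rw [MvPolynomial.coeff_add, hp.1]
    have : MvPolynomial.coeff e q = 0 := by
      by_contra h
      exact lt_irrefl _ (hq e h)
    rw [this, add_zero]
  · intro f hf h
    by_cases h1 : MvPolynomial.coeff f p = 0
    · rw [MvPolynomial.coeff_add, h1, zero_add] at h
      exact hq f h
    · exact hp.2 f hf h1

/-- Polynomials with distinct leading monomials are linearly independent. -/
theorem linearIndependent_of_isLead {ι : Type*} (p : ι → MvPolynomial τ K) (e : ι → τ →₀ ℕ)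
    (he : Function.Injective e) (h : ∀ i, IsLead w (p i) (e i)) : LinearIndependent K p := by
  classical
  rw [linearIndependent_iff']
  intro s c hc
  by_contra hne
  push Not at hne
  obtain ⟨i0, hi0, hci0⟩ := hne
  obtain ⟨i, hi, hmax⟩ := Finset.exists_max_image (s.filter fun i => c i ≠ 0)
    (fun i => Finsupp.weight w (e i)) ⟨i0, Finset.mem_filter.mpr ⟨hi0, hci0⟩⟩
  rw [Finset.mem_filter] at hi
  have h1 := congrArg (MvPolynomial.coeff (e i)) hc
  rw [MvPolynomial.coeff_sum, Finset.sum_eq_single i] at h1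
  · rw [MvPolynomial.coeff_smul, (h i).1, smul_eq_mul, mul_one, MvPolynomial.coeff_zero] at h1
    exact hi.2 h1
  · intro j hj hji
    rw [MvPolynomial.coeff_smul, smul_eq_mul]
    by_contra h2
    have h3 := (h j).2 (e i) (fun h => hji (he h).symm) (right_ne_zero_of_mul h2)
    have h4 := hmax j (Finset.mem_filter.mpr ⟨hj, left_ne_zero_of_mul h2⟩)
    exact absurd h3 (not_lt.mpr h4)
  · intro h
    exact absurd hi.1 h

theorem perm_sum_lt {t : ℕ} (f g : Fin t → ℕ) (hf : StrictAnti f) (hg : StrictAnti g)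
    (σ : Equiv.Perm (Fin t)) (hσ : σ ≠ 1) : ∑ i, f (σ i) * g i < ∑ i, f i * g i := by
  have hfg : Monovary f g := fun i j hij => hf.antitone (hg.lt_iff_gt.mp hij).le
  rw [hfg.sum_comp_perm_mul_lt_sum_mul_iff]
  intro hm
  apply hσ
  have hmono : StrictMono σ := by
    refine Monotone.strictMono_of_injective (fun i j hij => ?_) σ.injective
    rcases hij.eq_or_lt with rfl | hij
    · exact le_rfl
    · exact hf.le_iff_ge.mp (hm (hg hij))
  exact Equiv.ext fun i => congrFun (hmono.range_inj strictMono_id |>.mp (by simp)) i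

theorem perm_sum_le {t : ℕ} (f g : Fin t → ℕ) (hf : StrictAnti f) (hg : StrictAnti g)
    (σ : Equiv.Perm (Fin t)) : ∑ i, f (σ i) * g i ≤ ∑ i, f i * g i := by
  by_cases hσ : σ = 1
  · rw [hσ]; simp
  · exact (perm_sum_lt f g hf hg σ hσ).le

/-- The flagged generic matrix: the entry in row `a`, column `s` is a variable if `U s ≤ a` and
zero otherwise. -/
noncomputable def flagVar (K : Type*) [Field K] (x : ℕ × ℕ → τ) (U : ℕ → ℕ) (a s : ℕ) :
    MvPolynomial τ K :=
  if U s ≤ a then MvPolynomial.X (x (a, s)) else 0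

theorem prod_flagVar {t : ℕ} (x : ℕ × ℕ → τ) (U : ℕ → ℕ) (α s : Fin t → ℕ) :
    ∏ i, flagVar K x U (α i) (s i) = if ∀ i, U (s i) ≤ α i then
      MvPolynomial.monomial (∑ i, Finsupp.single (x (α i, s i)) 1) 1 else 0 := by
  split_ifs with h
  · rw [MvPolynomial.monomial_sum_one]
    refine Finset.prod_congr rfl fun i _ => ?_
    rw [flagVar, if_pos (h i)]
    rfl
  · push Not at h
    obtain ⟨i, hi⟩ := h
    refine Finset.prod_eq_zero (Finset.mem_univ i) ?_
    rw [flagVar, if_neg (by omega)]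

variable {n m t : ℕ} {x : ℕ × ℕ → τ} {U : ℕ → ℕ} {α : Fin t → ℕ}

theorem weight_exponent (hw : ∀ a s, w (x (a, s)) = (m - a) * (n - s)) (α s : Fin t → ℕ) :
    Finsupp.weight w (∑ i, Finsupp.single (x (α i, s i)) 1) = ∑ i, (m - α i) * (n - s i) := by
  rw [map_sum]
  refine Finset.sum_congr rfl fun i _ => ?_
  rw [Finsupp.weight_single, hw, one_smul]

/-- A maximal minor of the flagged generic matrix not on its first columns only has monomials of
small weight. -/
theorem isLow_det_flagVar (hw : ∀ a s, w (x (a, s)) = (m - a) * (n - s)) (hα : StrictMono α)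
    (hαm : ∀ i, α i < m) (s : Fin t → Fin n) (hs : StrictMono s)
    (hsne : ∃ i : Fin t, (s i : ℕ) ≠ i) :
    IsLow w (Matrix.of fun i j : Fin t => flagVar K x U (α i) (s j)).det
      (∑ i : Fin t, (m - α i) * (n - i)) := by
  classical
  rw [Matrix.det_apply]
  refine IsLow.sum fun σ _ f hf => ?_
  simp only [Matrix.of_apply] at hf
  rw [prod_flagVar x U (fun i => α (σ i)) (fun i => s i), Units.smul_def,
    MvPolynomial.coeff_smul] at hf
  have hf := right_ne_zero_of_smul hf
  split_ifs at hf with h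
  · rw [MvPolynomial.coeff_monomial] at hf
    have h1 : (∑ i, Finsupp.single (x (α (σ i), s i)) 1 : τ →₀ ℕ) = f := by
      by_contra hne
      rw [if_neg hne] at hf
      exact hf rfl
    rw [← h1, weight_exponent hw]
    have hsi : ∀ i : Fin t, (i : ℕ) ≤ s i := fun i => by
      have hs' : StrictMono fun i => (s i : ℕ) := fun i j hij => hs hij
      have : ∀ k (hk : k < t), k ≤ (s ⟨k, hk⟩ : ℕ) := by
        intro k
        induction k with
        | zero => intro _; exact Nat.zero_le _
        | succ k ih =>
          intro hk
          have h1 := ih (by omega)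
          have h2 := hs' (show (⟨k, by omega⟩ : Fin t) < ⟨k + 1, hk⟩ from Nat.lt_succ_self k)
          simp only at h2
          omega
      exact this i i.2
    refine lt_of_le_of_lt (perm_sum_le (fun i => m - α i) (fun i => n - s i) ?_ ?_ σ) ?_
    · intro i j hij
      have := hα hij
      have := hαm j
      simp only
      omega
    · intro i j hij
      have : (s i : ℕ) < s j := hs hij
      have := (s j).2
      simp only
      omega
    · refine Finset.sum_lt_sum (fun i _ => Nat.mul_le_mul_left _ (by have := hsi i; omega)) ?_
      obtain ⟨i, hi⟩ := hsne
      refine ⟨i, Finset.mem_univ i, Nat.mul_lt_mul_of_pos_left ?_ ?_⟩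
      · have := hsi i
        have := (s i).2
        omega
      · have := hαm i
        omega
  · simp at hf

/-- The leading monomial of a minor on the first columns is the diagonal one. -/
theorem isLead_det_flagVar (hw : ∀ a s, w (x (a, s)) = (m - a) * (n - s)) (hα : StrictMono α)
    (hαm : ∀ i, α i < m) (htn : t ≤ n) (hU : ∀ i : Fin t, U i ≤ α i) :
    IsLead w (Matrix.of fun i j : Fin t => flagVar K x U (α i) j).det
      (∑ i : Fin t, Finsupp.single (x (α i, i)) 1) := by
  classical
  rw [Matrix.det_apply, ← Finset.add_sum_erase _ _ (Finset.mem_univ (1 : Equiv.Perm (Fin t)))]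
  refine IsLead.add_low ?_ ?_
  · simp only [Matrix.of_apply, Equiv.Perm.sign_one, one_smul, Equiv.Perm.coe_one, id]
    rw [prod_flagVar, if_pos hU]
    refine ⟨by simp, fun f hf h => ?_⟩
    rw [MvPolynomial.coeff_monomial, if_neg (Ne.symm hf)] at h
    exact absurd rfl h
  · refine IsLow.sum fun σ hσ f hf => ?_
    simp only [Matrix.of_apply] at hf
    rw [prod_flagVar x U (fun i => α (σ i)) (fun i => i), Units.smul_def,
      MvPolynomial.coeff_smul] at hf
    have hf := right_ne_zero_of_smul hf
    split_ifs at hf with h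
    · rw [MvPolynomial.coeff_monomial] at hf
      have h1 : (∑ i, Finsupp.single (x (α (σ i), (i : ℕ))) 1 : τ →₀ ℕ) = f := by
        by_contra hne
        rw [if_neg hne] at hf
        exact hf rfl
      rw [← h1, weight_exponent hw, weight_exponent hw]
      refine perm_sum_lt (fun i => m - α i) (fun i : Fin t => n - i) ?_ ?_ σ
        (Finset.ne_of_mem_erase hσ)
      · intro i j hij
        have := hα hij
        have := hαm j
        simp only
        omega
      · intro i j hij
        have : (i : ℕ) < j := hij
        have := j.2
        simp only
        omega
    · simp at hf

/-- The leading monomial of a minor of a product of two flagged generic matrices: in the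
Cauchy–Binet expansion the term of the first columns dominates. -/
theorem isLead_det_mul {m' : ℕ} {x' : ℕ × ℕ → τ} {V : ℕ → ℕ} {β : Fin t → ℕ}
    (hw : ∀ a s, w (x (a, s)) = (m - a) * (n - s))
    (hw' : ∀ a s, w (x' (a, s)) = (m' - a) * (n - s)) (hα : StrictMono α) (hβ : StrictMono β)
    (hαm : ∀ i, α i < m) (hβm : ∀ i, β i < m') (htn : t ≤ n) (hU : ∀ i : Fin t, U i ≤ α i)
    (hV : ∀ i : Fin t, V i ≤ β i) :
    IsLead w (Matrix.of fun i j : Fin t =>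
        ∑ s ∈ Finset.range n, flagVar K x U (α i) s * flagVar K x' V (β j) s).det
      (∑ i : Fin t, Finsupp.single (x (α i, i)) 1 +
        ∑ i : Fin t, Finsupp.single (x' (β i, i)) 1) := by
  classical
  have h1 : (Matrix.of fun i j : Fin t =>
        ∑ s ∈ Finset.range n, flagVar K x U (α i) s * flagVar K x' V (β j) s) =
      (Matrix.of fun (i : Fin t) (s : Fin n) => flagVar K x U (α i) s) *
      (Matrix.of fun (s : Fin n) (j : Fin t) => flagVar K x' V (β j) s) := by
    ext1 i j
    rw [Matrix.mul_apply]
    simp only [Matrix.of_apply]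
    exact (Fin.sum_univ_eq_sum_range
      (fun s => flagVar K x U (α i) s * flagVar K x' V (β j) s) n).symm
  have hmem : Fin.castLE htn ∈ Finset.univ.filter fun s : Fin t → Fin n => StrictMono s :=
    Finset.mem_filter.mpr ⟨Finset.mem_univ _, Fin.strictMono_castLE htn⟩
  rw [h1, det_mul_cauchyBinet, ← Finset.add_sum_erase _ _ hmem]
  refine IsLead.add_low ?_ ?_
  · refine IsLead.mul (isLead_det_flagVar hw hα hαm htn hU) ?_
    rw [← Matrix.det_transpose]
    exact isLead_det_flagVar hw' hβ hβm htn hV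
  · refine IsLow.sum fun s hs => ?_
    rw [Finset.mem_erase, Finset.mem_filter] at hs
    have hne : ∃ i : Fin t, (s i : ℕ) ≠ i := by
      by_contra h
      push Not at h
      exact hs.1 (funext fun i => Fin.ext (h i))
    rw [map_add, weight_exponent hw, weight_exponent hw']
    refine IsLow.mul (isLow_det_flagVar hw hα hαm s hs.2.2 hne) ?_
    rw [← Matrix.det_transpose]
    exact isLow_det_flagVar hw' hβ hβm s hs.2.2 hne

end Lead

/-! ### Entries of tableaux and diagonal monomials -/

/-- The entry in row `i`, column `c` of the tableau encoded by `g`. -/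
noncomputable def ent (g : ℕ → ℕ → ℕ) (i c : ℕ) : ℕ := sInf {a | c < g (a + 1) i}

/-- The length of column `c` of the partition `lam`. -/
noncomputable def len (lam : ℕ → ℕ) (c : ℕ) : ℕ := sInf {i | lam i ≤ c}

theorem lt_len_iff {lam : ℕ → ℕ} (hanti : Antitone lam) {n : ℕ} (h0 : ∀ i, n ≤ i → lam i = 0)
    {i c : ℕ} : i < len lam c ↔ c < lam i := by
  have hne : {i | lam i ≤ c}.Nonempty := ⟨n, by simp [h0 n le_rfl]⟩
  constructor
  · intro h
    by_contra h1
    exact absurd (Nat.sInf_le (show i ∈ {i | lam i ≤ c} from not_lt.mp h1)) (not_le.mpr h)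
  · intro h
    by_contra h1
    have h2 : lam (len lam c) ≤ c := Nat.sInf_mem hne
    have h3 := hanti (not_lt.mp h1)
    omega

theorem len_le {lam : ℕ → ℕ} (hanti : Antitone lam) {n : ℕ} (h0 : ∀ i, n ≤ i → lam i = 0)
    (c : ℕ) : len lam c ≤ n := by
  by_contra h
  have := (lt_len_iff hanti h0).mp (not_le.mp h)
  rw [h0 n le_rfl] at this
  omega

theorem sum_len {lam : ℕ → ℕ} (hanti : Antitone lam) {n : ℕ} (h0 : ∀ i, n ≤ i → lam i = 0)
    {L : ℕ} (hL : lam 0 ≤ L) : ∑ c ∈ Finset.range L, len lam c = ∑ i ∈ Finset.range n, lam i := by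
  have h1 : ∀ c, len lam c = ∑ i ∈ Finset.range n, if c < lam i then 1 else 0 := by
    intro c
    rw [Finset.sum_boole, Nat.cast_id]
    have : (Finset.range n).filter (fun i => c < lam i) = Finset.range (len lam c) := by
      ext i
      rw [Finset.mem_filter, Finset.mem_range, Finset.mem_range, lt_len_iff hanti h0]
      refine ⟨fun h => h.2, fun h => ⟨?_, h⟩⟩
      by_contra h2
      rw [h0 i (not_lt.mp h2)] at h
      omega
    rw [this, Finset.card_range]
  rw [Finset.sum_congr rfl fun c _ => h1 c, Finset.sum_comm]
  refine Finset.sum_congr rfl fun i _ => ?_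
  rw [Finset.sum_boole, Nat.cast_id]
  have : (Finset.range L).filter (fun c => c < lam i) = Finset.range (lam i) := by
    ext c
    rw [Finset.mem_filter, Finset.mem_range, Finset.mem_range]
    have := hanti (Nat.zero_le i)
    omega
  rw [this, Finset.card_range]

namespace IsGT

variable {n m : ℕ} {U lam : ℕ → ℕ} {g : ℕ → ℕ → ℕ}

theorem lt_of_lt (h : IsGT n U m lam g) {i c : ℕ} (hc : c < lam i) : i < n := by
  by_contra h1
  rw [h.lam_zero (not_lt.mp h1)] at hc
  omega

theorem at_zero (h : IsGT n U m lam g) (i : ℕ) : g 0 i = 0 := by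
  rcases lt_or_ge i n with hi | hi
  · exact h.flag 0 i hi (Nat.zero_le _)
  · exact h.zero 0 i hi

theorem monotone (h : IsGT n U m lam g) (i : ℕ) : Monotone fun a => g a i :=
  monotone_nat_of_le_succ fun a => h.mono a i

theorem le_lam (h : IsGT n U m lam g) (a i : ℕ) : g a i ≤ lam i := by
  have h1 := h.monotone i (le_max_left a m)
  have h2 := congrFun (h.top (max a m) (le_max_right a m)) i
  exact h1.trans h2.le

theorem ent_lt_iff (h : IsGT n U m lam g) {i c a : ℕ} (hc : c < lam i) :
    ent g i c < a ↔ c < g a i := by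
  have hne : {a | c < g (a + 1) i}.Nonempty :=
    ⟨m, by change c < g (m + 1) i; rw [h.top (m + 1) (Nat.le_succ m)]; exact hc⟩
  constructor
  · intro h1
    have h2 : c < g (ent g i c + 1) i := Nat.sInf_mem hne
    exact h2.trans_le (h.monotone i h1)
  · intro h1
    cases a with
    | zero => rw [h.at_zero] at h1; omega
    | succ a => exact Nat.lt_succ_of_le (Nat.sInf_le h1)

theorem ent_lt (h : IsGT n U m lam g) {i c : ℕ} (hc : c < lam i) : ent g i c < m := by
  rw [h.ent_lt_iff hc, h.top m le_rfl]
  exact hc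

theorem le_ent (h : IsGT n U m lam g) {i c : ℕ} (hc : c < lam i) : U i ≤ ent g i c := by
  by_contra h1
  have h2 := (h.ent_lt_iff hc).mp (not_le.mp h1)
  rw [h.flag _ i (h.lt_of_lt hc) le_rfl] at h2
  omega

theorem ent_strict (h : IsGT n U m lam g) {i j c : ℕ} (hij : i < j) (hc : c < lam j) :
    ent g i c < ent g j c := by
  rw [h.ent_lt_iff (hc.trans_le (h.lam_anti hij.le))]
  exact ((h.ent_lt_iff hc).mp (Nat.lt_succ_self _)).trans_le (h.strict _ i j hij)

theorem lam_le_sum (h : IsGT n U m lam g) (i : ℕ) : lam i ≤ ∑ i ∈ Finset.range n, lam i := by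
  rcases lt_or_ge i n with hi | hi
  · exact Finset.single_le_sum (f := lam) (fun _ _ => Nat.zero_le _) (Finset.mem_range.mpr hi)
  · rw [h.lam_zero hi]; exact Nat.zero_le _

end IsGT

section Exponent

variable {τ : Type*} {x x' : ℕ × ℕ → τ}

/-- The diagonal exponent of a bitableau with columns `c < L`. -/
noncomputable def btExp (x x' : ℕ × ℕ → τ) (L : ℕ) (lam : ℕ → ℕ) (g h : ℕ → ℕ → ℕ) : τ →₀ ℕ :=
  ∑ c ∈ Finset.range L, (∑ i : Fin (len lam c), Finsupp.single (x (ent g i c, i)) 1 +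
    ∑ i : Fin (len lam c), Finsupp.single (x' (ent h i c, i)) 1)

theorem btExp_swap (L : ℕ) (lam : ℕ → ℕ) (g h : ℕ → ℕ → ℕ) :
    btExp x x' L lam g h = btExp x' x L lam h g :=
  Finset.sum_congr rfl fun _ _ => add_comm _ _

/-- The diagonal exponent determines the tableau: it counts the entries of each row. -/
theorem sum_btExp (hx : Function.Injective x) (hxx : ∀ p q, x p ≠ x' q) {n m L : ℕ}
    {U lam : ℕ → ℕ} {g h : ℕ → ℕ → ℕ} (hg : IsGT n U m lam g) (hL : lam 0 ≤ L) (a i : ℕ) :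
    ∑ b ∈ Finset.range a, btExp x x' L lam g h (x (b, i)) = g a i := by
  classical
  have h1 : ∀ b c, (∑ k : Fin (len lam c), Finsupp.single (x (ent g k c, (k : ℕ))) 1 +
      ∑ k : Fin (len lam c), Finsupp.single (x' (ent h k c, (k : ℕ))) 1 : τ →₀ ℕ) (x (b, i)) =
      if c < lam i ∧ ent g i c = b then 1 else 0 := by
    intro b c
    rw [Finsupp.add_apply, Finsupp.finsetSum_apply, Finsupp.finsetSum_apply]
    have h2 : ∑ k : Fin (len lam c),
        (Finsupp.single (x' (ent h k c, (k : ℕ))) 1 : τ →₀ ℕ) (x (b, i)) = 0 :=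
      Finset.sum_eq_zero fun k _ => Finsupp.single_eq_of_ne (hxx _ _)
    have hiff : c < lam i ↔ i < len lam c :=
      (lt_len_iff hg.lam_anti (n := n) (fun i hi => hg.lam_zero hi)).symm
    rw [h2, add_zero, if_congr (and_congr_left' hiff) rfl rfl]
    have h3 : ∀ k : Fin (len lam c),
        (Finsupp.single (x (ent g k c, (k : ℕ))) 1 : τ →₀ ℕ) (x (b, i)) =
        if (k : ℕ) = i ∧ ent g i c = b then 1 else 0 := by
      intro k
      rw [Finsupp.single_apply]
      refine if_congr ?_ rfl rfl
      rw [hx.eq_iff, Prod.mk.injEq]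
      constructor
      · rintro ⟨h4, h5⟩
        rw [h5] at h4
        exact ⟨h5, h4⟩
      · rintro ⟨h4, h5⟩
        rw [h4]
        exact ⟨h5, rfl⟩
    rw [Finset.sum_congr rfl fun k _ => h3 k]
    by_cases hi : i < len lam c
    · rw [Finset.sum_eq_single (⟨i, hi⟩ : Fin (len lam c))]
      · simp [hi]
      · intro k _ hk
        rw [if_neg]
        rintro ⟨h4, -⟩
        exact hk (Fin.ext h4)
      · simp
    · rw [if_neg (fun h => hi h.1)]
      refine Finset.sum_eq_zero fun k _ => if_neg ?_
      rintro ⟨h4, -⟩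
      exact hi (h4 ▸ k.2)
  unfold btExp
  simp only [Finsupp.finsetSum_apply]
  rw [Finset.sum_comm]
  have h4 : ∀ c, ∑ b ∈ Finset.range a,
      (∑ k : Fin (len lam c), Finsupp.single (x (ent g k c, (k : ℕ))) 1 +
      ∑ k : Fin (len lam c), Finsupp.single (x' (ent h k c, (k : ℕ))) 1 : τ →₀ ℕ) (x (b, i)) =
      if c < g a i then 1 else 0 := by
    intro c
    rw [Finset.sum_congr rfl fun b _ => h1 b c]
    by_cases hc : c < lam i
    · simp only [hc, true_and, Finset.sum_ite_eq, Finset.mem_range, hg.ent_lt_iff hc]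
    · have := hg.le_lam a i
      rw [if_neg (by omega)]
      exact Finset.sum_eq_zero fun b _ => if_neg fun h => hc h.1
  rw [Finset.sum_congr rfl fun c _ => h4 c, Finset.sum_boole, Nat.cast_id]
  have : (Finset.range L).filter (fun c => c < g a i) = Finset.range (g a i) := by
    ext c
    rw [Finset.mem_filter, Finset.mem_range, Finset.mem_range]
    have := hg.le_lam a i
    have := hg.lam_anti (Nat.zero_le i)
    omega
  rw [this, Finset.card_range]

variable {K : Type*} [Field K] {w : τ → ℕ}

/-- The leading monomial of the image of a standard bitableau is its diagonal monomial. -/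
theorem isLead_bitableau {n m m' L : ℕ} {U V lam : ℕ → ℕ} {g h : ℕ → ℕ → ℕ}
    (hw : ∀ a s, w (x (a, s)) = (m - a) * (n - s))
    (hw' : ∀ a s, w (x' (a, s)) = (m' - a) * (n - s))
    (hg : IsGT n U m lam g) (hh : IsGT n V m' lam h) :
    IsLead w (∏ c ∈ Finset.range L, (Matrix.of fun i j : Fin (len lam c) =>
        ∑ s ∈ Finset.range n, flagVar K x U (ent g i c) s * flagVar K x' V (ent h j c) s).det)
      (btExp x x' L lam g h) := by
  have hlt : ∀ {i c}, i < len lam c → c < lam i := fun h =>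
    (lt_len_iff hg.lam_anti (n := n) (fun i hi => hg.lam_zero hi)).mp h
  refine IsLead.prod _ _ _ fun c _ => ?_
  exact isLead_det_mul (α := fun i : Fin (len lam c) => ent g i c)
    (β := fun i : Fin (len lam c) => ent h i c) hw hw'
    (fun i j hij => hg.ent_strict hij (hlt j.2)) (fun i j hij => hh.ent_strict hij (hlt j.2))
    (fun i => hg.ent_lt (hlt i.2)) (fun i => hh.ent_lt (hlt i.2))
    (len_le hg.lam_anti (fun i hi => hg.lam_zero hi) c) (fun i => hg.le_ent (hlt i.2))
    (fun i => hh.le_ent (hlt i.2))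

end Exponent

/-! ### Bitableaux and the flagged specialization -/

section Bitableaux

variable (K : Type*) [Field K] (A B : ℕ)

/-- The entry in row `a`, column `b` of the generic matrix with rows and columns in reversed
order. -/
noncomputable def revVar (a b : ℕ) : MvPolynomial (Fin (A + 1) × Fin (B + 1)) K :=
  MvPolynomial.X (Fin.rev (Fin.ofNat (A + 1) a), Fin.rev (Fin.ofNat (B + 1) b))

/-- The minor with rows `α` and columns `β` of the reversed generic matrix. -/
noncomputable def revMinor (t : ℕ) (α β : ℕ → ℕ) : MvPolynomial (Fin (A + 1) × Fin (B + 1)) K :=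
  (Matrix.of fun i j : Fin t => revVar K A B (α i) (β j)).det

/-- The product of the minors given by the first `L` columns of the pair of tableaux `x`, encoded
as patterns of the same shape. -/
noncomputable def bitableau (L : ℕ) (x : (ℕ → ℕ → ℕ) × (ℕ → ℕ → ℕ)) :
    MvPolynomial (Fin (A + 1) × Fin (B + 1)) K :=
  ∏ c ∈ Finset.range L, revMinor K A B (len (x.1 (A + 1)) c) (fun i => ent x.1 i c)
    (fun i => ent x.2 i c)

/-- The specialization of the generic matrix to a product of two flagged generic matrices. -/
noncomputable def flagMap (n : ℕ) (U V : ℕ → ℕ) :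
    MvPolynomial (Fin (A + 1) × Fin (B + 1)) K →ₐ[K] MvPolynomial ((ℕ × ℕ) ⊕ (ℕ × ℕ)) K :=
  MvPolynomial.aeval fun p => ∑ s ∈ Finset.range n,
    flagVar K Sum.inl U (Fin.rev p.1) s * flagVar K Sum.inr V (Fin.rev p.2) s

variable {K A B}

theorem isHomogeneous_revMinor (t : ℕ) (α β : ℕ → ℕ) :
    (revMinor K A B t α β).IsHomogeneous t := by
  unfold revMinor
  rw [Matrix.det_apply]
  refine MvPolynomial.IsHomogeneous.sum _ _ _ fun σ _ => ?_
  rw [Units.smul_def, ← MvPolynomial.mem_homogeneousSubmodule]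
  refine zsmul_mem ?_ _
  rw [MvPolynomial.mem_homogeneousSubmodule]
  have := MvPolynomial.IsHomogeneous.prod (R := K) Finset.univ
    (fun i : Fin t => revVar K A B (α (σ i)) (β i)) (fun _ => 1)
    (fun i _ => MvPolynomial.isHomogeneous_X K _)
  simpa using this

theorem isHomogeneous_bitableau {n L : ℕ} {U lam : ℕ → ℕ} {x : (ℕ → ℕ → ℕ) × (ℕ → ℕ → ℕ)}
    (hg : IsGT n U (A + 1) lam x.1) (hL : ∑ i ∈ Finset.range n, lam i = L) :
    (bitableau K A B L x).IsHomogeneous L := by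
  have h0 : lam 0 ≤ L := hL ▸ hg.lam_le_sum 0
  have h1 := sum_len hg.lam_anti (n := n) (fun i hi => hg.lam_zero hi) h0
  have h2 := MvPolynomial.IsHomogeneous.prod (Finset.range L)
    (fun c => revMinor K A B (len (x.1 (A + 1)) c) (fun i => ent x.1 i c) (fun i => ent x.2 i c))
    (fun c => len (x.1 (A + 1)) c) (fun c _ => isHomogeneous_revMinor _ _ _)
  rwa [hg.top _ le_rfl, h1, hL, ← hg.top _ le_rfl] at h2

theorem flagMap_revMinor {n : ℕ} {U V : ℕ → ℕ} {t : ℕ} {α β : ℕ → ℕ}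
    (hα : ∀ i < t, α i < A + 1) (hβ : ∀ i < t, β i < B + 1) :
    flagMap K A B n U V (revMinor K A B t α β) = (Matrix.of fun i j : Fin t =>
      ∑ s ∈ Finset.range n, flagVar K Sum.inl U (α i) s * flagVar K Sum.inr V (β j) s).det := by
  unfold revMinor
  rw [AlgHom.map_det]
  congr 1
  ext1 i j
  rw [AlgHom.mapMatrix_apply, Matrix.map_apply, Matrix.of_apply, Matrix.of_apply, revVar, flagMap,
    MvPolynomial.aeval_X]
  simp only [Fin.rev_rev, Fin.val_ofNat, Nat.mod_eq_of_lt (hα i i.2), Nat.mod_eq_of_lt (hβ j j.2)]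

/-- Standard bitableaux stay linearly independent under the specialization. -/
theorem linearIndependent_flagMap {n L : ℕ} {U V : ℕ → ℕ}
    {T : Finset ((ℕ → ℕ → ℕ) × (ℕ → ℕ → ℕ))}
    (hT : ∀ x ∈ T, ∃ lam, IsGT n U (A + 1) lam x.1 ∧ IsGT n V (B + 1) lam x.2 ∧
      ∑ i ∈ Finset.range n, lam i = L) :
    LinearIndependent K (fun x : T => flagMap K A B n U V (bitableau K A B L x)) := by
  have h0 : ∀ x : T, ∀ lam, IsGT n U (A + 1) lam x.1.1 → ∑ i ∈ Finset.range n, lam i = L →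
      lam 0 ≤ L := fun x lam hg hL => hL ▸ hg.lam_le_sum 0
  refine linearIndependent_of_isLead (w := Sum.elim (fun p => (A + 1 - p.1) * (n - p.2))
    (fun p => (B + 1 - p.1) * (n - p.2))) _
    (fun x => btExp Sum.inl Sum.inr L (x.1.1 (A + 1)) x.1.1 x.1.2) ?_ ?_
  · intro x y hxy
    obtain ⟨lam, hg, hh, hs⟩ := hT x x.2
    obtain ⟨lam', hg', hh', hs'⟩ := hT y y.2
    simp only [hg.top _ le_rfl, hg'.top _ le_rfl] at hxy
    refine Subtype.ext (Prod.ext ?_ ?_)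
    · funext a i
      rw [← sum_btExp Sum.inl_injective (fun p q => Sum.inl_ne_inr) hg (h0 x lam hg hs) a i, hxy,
        sum_btExp Sum.inl_injective (fun p q => Sum.inl_ne_inr) hg' (h0 y lam' hg' hs') a i]
    · funext a i
      rw [btExp_swap, btExp_swap (x := Sum.inl)] at hxy
      rw [← sum_btExp Sum.inr_injective (fun p q => Sum.inr_ne_inl) hh (h0 x lam hg hs) a i, hxy,
        sum_btExp Sum.inr_injective (fun p q => Sum.inr_ne_inl) hh' (h0 y lam' hg' hs') a i]
  · intro x
    obtain ⟨lam, hg, hh, hs⟩ := hT x x.2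
    have h1 := isLead_bitableau (K := K) (L := L) (x := Sum.inl) (x' := Sum.inr)
      (w := Sum.elim (fun p => (A + 1 - p.1) * (n - p.2))
      (fun p => (B + 1 - p.1) * (n - p.2))) (fun a s => rfl) (fun a s => rfl) hg hh
    rw [bitableau, map_prod]
    simp only [hg.top _ le_rfl]
    convert h1 using 1
    refine Finset.prod_congr rfl fun c _ => ?_
    have hlt : ∀ i < len lam c, c < lam i := fun i h =>
      (lt_len_iff hg.lam_anti (n := n) (fun i hi => hg.lam_zero hi)).mp h
    exact flagMap_revMinor (fun i hi => hg.ent_lt (hlt i hi)) (fun i hi => hh.ent_lt (hlt i hi))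

/-- The specialization kills the cogenerated ideal: by Cauchy–Binet, each of its generators is a
sum of products of minors one of which has a vanishing column. -/
theorem detIdeal_le_ker {n : ℕ} {u v : ℕ → ℕ}
    (hu_mono : ∀ i j, 1 ≤ i → i < j → j ≤ n → u i < u j)
    (hv_mono : ∀ i j, 1 ≤ i → i < j → j ≤ n → v i < v j) :
    ∀ f ∈ detIdeal K A B n u v,
      flagMap K A B n (fun i => u (i + 1) - 1) (fun i => v (i + 1) - 1) f = 0 := by
  intro f hf
  suffices h : detIdeal K A B n u v ≤ RingHom.ker
      (flagMap K A B n (fun i => u (i + 1) - 1) (fun i => v (i + 1) - 1)) from h hf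
  rw [detIdeal, Ideal.span_le]
  rintro _ ⟨t, ht, htn, r, c, hr, hc, hrc, rfl⟩
  rw [SetLike.mem_coe, RingHom.mem_ker, AlgHom.map_det]
  have h1 : (flagMap K A B n (fun i => u (i + 1) - 1) (fun i => v (i + 1) - 1)).mapMatrix
      ((genericMatrix K A B).submatrix r c) =
      ((Matrix.of fun (k : Fin t) (s : Fin n) =>
        flagVar K Sum.inl (fun i => u (i + 1) - 1) (Fin.rev (r k)) s :
        Matrix (Fin t) (Fin n) (MvPolynomial ((ℕ × ℕ) ⊕ (ℕ × ℕ)) K)) *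
      (Matrix.of fun (s : Fin n) (l : Fin t) =>
        flagVar K Sum.inr (fun i => v (i + 1) - 1) (Fin.rev (c l)) s :
        Matrix (Fin n) (Fin t) (MvPolynomial ((ℕ × ℕ) ⊕ (ℕ × ℕ)) K)) :
        Matrix (Fin t) (Fin t) (MvPolynomial ((ℕ × ℕ) ⊕ (ℕ × ℕ)) K)) := by
    ext1 k l
    rw [AlgHom.mapMatrix_apply, Matrix.map_apply, Matrix.submatrix_apply, genericMatrix, flagMap,
      MvPolynomial.aeval_X, Matrix.mul_apply]
    simp only [Matrix.of_apply]
    exact (Fin.sum_univ_eq_sum_range (fun s =>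
      (flagVar K Sum.inl (fun i => u (i + 1) - 1) (Fin.rev (r k)) s *
        flagVar K Sum.inr (fun i => v (i + 1) - 1) (Fin.rev (c l)) s :
        MvPolynomial ((ℕ × ℕ) ⊕ (ℕ × ℕ)) K)) n).symm
  rw [h1, det_mul_cauchyBinet]
  refine Finset.sum_eq_zero fun s hs => ?_
  have hs := (Finset.mem_filter.mp hs).2
  have hle : t - 1 ≤ (s ⟨t - 1, by omega⟩ : ℕ) := by
    have : ∀ k (hk : k < t), k ≤ (s ⟨k, hk⟩ : ℕ) := by
      intro k
      induction k with
      | zero => intro _; exact Nat.zero_le _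
      | succ k ih =>
        intro hk
        have h1 := ih (by omega)
        have h2 : (s ⟨k, by omega⟩ : ℕ) < s ⟨k + 1, hk⟩ :=
          hs (show (⟨k, by omega⟩ : Fin t) < ⟨k + 1, hk⟩ from Nat.lt_succ_self k)
        omega
    exact this _ _
  have hlt := (s ⟨t - 1, by omega⟩).2
  have hmon : ∀ w : ℕ → ℕ, (∀ i j, 1 ≤ i → i < j → j ≤ n → w i < w j) →
      w t ≤ w (s ⟨t - 1, by omega⟩ + 1) := by
    intro w hw
    rcases (show t ≤ (s ⟨t - 1, by omega⟩ : ℕ) + 1 by omega).eq_or_lt with h | h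
    · rw [← h]
    · exact (hw _ _ ht h (by omega)).le
  rcases hrc with h | h
  · rw [Matrix.det_eq_zero_of_column_eq_zero (⟨t - 1, by omega⟩ : Fin t), zero_mul]
    intro k
    rw [Matrix.submatrix_apply, Matrix.of_apply, flagVar, if_neg]
    have := h k
    have := hmon u hu_mono
    have := (r k).2
    rw [Fin.val_rev, id]
    omega
  · refine mul_eq_zero_of_right _ (Matrix.det_eq_zero_of_row_eq_zero (⟨t - 1, by omega⟩ : Fin t) ?_)
    intro k
    rw [Matrix.submatrix_apply, Matrix.of_apply, flagVar, if_neg]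
    have := h k
    have := hmon v hv_mono
    have := (c k).2
    rw [Fin.val_rev, id]
    omega

end Bitableaux

/-! ### Nonstandard products in the cogenerated ideal -/

/-- If all the minors with the rows `α 0, …, α (k - 1)` lie in an ideal, then so do all the larger
minors having these rows among theirs, by Laplace expansion along the last row. -/
theorem det_mem_of_laplace {R : Type*} [CommRing R] (I : Ideal R) (F : ℕ → ℕ → R) (N k : ℕ)
    (α : ℕ → ℕ)
    (h : ∀ β : ℕ → ℕ, (∀ i j, i < j → j < k → β i < β j) → (∀ i < k, β i < N) →
      (Matrix.of fun i j : Fin k => F (α i) (β j)).det ∈ I) (t : ℕ) (ht : k ≤ t) :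
    ∀ β : ℕ → ℕ, (∀ i j, i < j → j < t → β i < β j) → (∀ i < t, β i < N) →
      (Matrix.of fun i j : Fin t => F (α i) (β j)).det ∈ I := by
  induction t, ht using Nat.le_induction with
  | base => exact h
  | succ t _ ih =>
    intro β hβ hβN
    rw [Matrix.det_succ_row _ (Fin.last t)]
    refine I.sum_mem fun j _ => I.mul_mem_left _ ?_
    have h1 : ((Matrix.of fun i j : Fin (t + 1) => F (α i) (β j)).submatrix
        (Fin.last t).succAbove j.succAbove) = (Matrix.of fun i l : Fin t =>
          F (α i) ((fun l : ℕ => β (if l < j then l else l + 1)) l)) := by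
      ext1 i l
      simp only [Matrix.submatrix_apply, Matrix.of_apply, Fin.succAbove_last, Fin.val_castSucc]
      congr 2
      by_cases hl : (l : ℕ) < j
      · rw [if_pos hl, Fin.succAbove_of_castSucc_lt _ _ hl, Fin.val_castSucc]
      · rw [if_neg hl, Fin.succAbove_of_le_castSucc _ _ (by
          rw [Fin.le_def, Fin.val_castSucc]; omega), Fin.val_succ]
    rw [h1]
    refine ih (fun l : ℕ => β (if l < j then l else l + 1)) (fun i l hil hl => ?_) (fun i hi => ?_)
    · split_ifs <;> exact hβ _ _ (by omega) (by omega)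
    · split_ifs <;> exact hβN _ (by omega)

section

variable {K : Type*} [Field K] {A B n : ℕ} {u v : ℕ → ℕ}

/-- The minors of the reversed matrix which generate the cogenerated ideal. -/
theorem revMinor_mem {k : ℕ} (hk : 1 ≤ k) (hkn : k ≤ n + 1) {α β : ℕ → ℕ}
    (hα : ∀ i j, i < j → j < k → α i < α j) (hαA : ∀ i < k, α i < A + 1)
    (hβ : ∀ i j, i < j → j < k → β i < β j) (hβB : ∀ i < k, β i < B + 1)
    (h : (∀ i < k, α i + 2 ≤ u k) ∨ (∀ i < k, β i + 2 ≤ v k)) :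
    revMinor K A B k α β ∈ detIdeal K A B n u v := by
  refine Ideal.subset_span ⟨k, hk, hkn,
    fun i => Fin.rev (Fin.ofNat (A + 1) (α (Fin.rev i))),
    fun i => Fin.rev (Fin.ofNat (B + 1) (β (Fin.rev i))), ?_, ?_, ?_, ?_⟩
  · intro i j hij
    rw [Fin.rev_lt_rev, Fin.lt_def, Fin.val_ofNat, Fin.val_ofNat,
      Nat.mod_eq_of_lt (hαA _ (Fin.is_lt _)), Nat.mod_eq_of_lt (hαA _ (Fin.is_lt _))]
    exact hα _ _ (Fin.rev_lt_rev.mpr hij) (Fin.is_lt _)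
  · intro i j hij
    rw [Fin.rev_lt_rev, Fin.lt_def, Fin.val_ofNat, Fin.val_ofNat,
      Nat.mod_eq_of_lt (hβB _ (Fin.is_lt _)), Nat.mod_eq_of_lt (hβB _ (Fin.is_lt _))]
    exact hβ _ _ (Fin.rev_lt_rev.mpr hij) (Fin.is_lt _)
  · refine h.imp (fun h i => ?_) (fun h i => ?_)
    · have h1 := h _ (Fin.rev i).2
      have h2 := hαA _ (Fin.rev i).2
      rw [Fin.val_rev (Fin.ofNat (A + 1) _), Fin.val_ofNat, Nat.mod_eq_of_lt h2]
      omega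
    · have h1 := h _ (Fin.rev i).2
      have h2 := hβB _ (Fin.rev i).2
      rw [Fin.val_rev (Fin.ofNat (B + 1) _), Fin.val_ofNat, Nat.mod_eq_of_lt h2]
      omega
  · rw [revMinor, ← Matrix.det_submatrix_equiv_self Fin.revPerm]
    rfl

/-- A standard bitableau whose first column violates the flag conditions of the bivector lies in
the cogenerated ideal. -/
theorem bitableau_mem {n₀ L : ℕ} {U₀ V₀ lam : ℕ → ℕ} {x : (ℕ → ℕ → ℕ) × (ℕ → ℕ → ℕ)}
    (hg : IsGT n₀ U₀ (A + 1) lam x.1) (hh : IsGT n₀ V₀ (B + 1) lam x.2)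
    (hL : ∑ i ∈ Finset.range n₀, lam i = L) {i : ℕ} (hin : i ≤ n) (hi : 0 < lam i)
    (h : ent x.1 i 0 + 2 ≤ u (i + 1) ∨ ent x.2 i 0 + 2 ≤ v (i + 1)) :
    bitableau K A B L x ∈ detIdeal K A B n u v := by
  have hlen : ∀ {j}, j < len lam 0 ↔ 0 < lam j :=
    lt_len_iff hg.lam_anti (n := n₀) (fun i hi => hg.lam_zero hi)
  have h0 : 0 ∈ Finset.range L := by
    rw [Finset.mem_range]
    exact hi.trans_le (hL ▸ hg.lam_le_sum i)
  have hpos : ∀ j, j < i + 1 → 0 < lam j := fun j hj =>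
    hi.trans_le (hg.lam_anti (by omega))
  have hgs : ∀ {k}, k < len lam 0 → ∀ j, j < k → ent x.1 j 0 < ent x.1 k 0 := fun hk j hj =>
    hg.ent_strict hj (hlen.mp hk)
  have hhs : ∀ {k}, k < len lam 0 → ∀ j, j < k → ent x.2 j 0 < ent x.2 k 0 := fun hk j hj =>
    hh.ent_strict hj (hlen.mp hk)
  have hile : i + 1 ≤ len lam 0 := hlen.mpr hi
  rw [bitableau, ← Finset.mul_prod_erase _ _ h0]
  refine Ideal.mul_mem_right _ _ ?_
  rw [hg.top _ le_rfl]
  clear h0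
  rcases h with h | h
  · refine det_mem_of_laplace (detIdeal K A B n u v) (revVar K A B) (B + 1) (i + 1)
      (fun j => ent x.1 j 0) (fun β hβ hβB => ?_) (len lam 0) hile (fun j => ent x.2 j 0)
      (fun a b hab hb => hhs hb a hab)
      (fun j hj => hh.ent_lt (hlen.mp hj))
    suffices key : revMinor K A B (i + 1) (fun j => ent x.1 j 0) β ∈ detIdeal K A B n u v by
      rwa [revMinor] at key
    refine revMinor_mem (by omega) (by omega) (fun a b hab hb => hgs (by omega) a hab)
      (fun j hj => hg.ent_lt (hpos j hj)) hβ hβB (Or.inl fun j hj => ?_)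
    rcases (Nat.lt_succ_iff.mp hj).eq_or_lt with rfl | hj
    · exact h
    · have := hgs (k := i) (by omega) j hj
      omega
  · rw [revMinor, ← Matrix.det_transpose]
    refine det_mem_of_laplace (detIdeal K A B n u v) (fun b a => revVar K A B a b) (A + 1) (i + 1)
      (fun j => ent x.2 j 0) (fun α hα hαA => ?_) (len lam 0) hile (fun j => ent x.1 j 0)
      (fun a b hab hb => hgs hb a hab)
      (fun j hj => hg.ent_lt (hlen.mp hj))
    rw [← Matrix.det_transpose]
    suffices key : revMinor K A B (i + 1) α (fun j => ent x.2 j 0) ∈ detIdeal K A B n u v by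
      rwa [revMinor] at key
    refine revMinor_mem (by omega) (by omega) hα hαA (fun a b hab hb => hhs (by omega) a hab)
      (fun j hj => hh.ent_lt (hpos j hj)) (Or.inr fun j hj => ?_)
    rcases (Nat.lt_succ_iff.mp hj).eq_or_lt with rfl | hj
    · exact h
    · have := hhs (k := i) (by omega) j hj
      omega

/-- A tableau satisfies the flag conditions as soon as its first column does. -/
theorem IsGT.of_first_column {n₀ m n : ℕ} {U₀ U lam : ℕ → ℕ} {g : ℕ → ℕ → ℕ}
    (hg : IsGT n₀ U₀ m lam g) (h : ∀ i, 0 < lam i → i < n ∧ U i ≤ ent g i 0) :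
    IsGT n U m lam g := by
  refine ⟨fun a i hi => ?_, fun a i hi ha => ?_, hg.mono, hg.strict, hg.top⟩
  · by_contra h1
    have h2 := hg.le_lam a i
    have := (h i (by omega)).1
    omega
  · by_contra h1
    have h2 := hg.le_lam a i
    have h3 := (h i (by omega)).2
    have h4 := (hg.ent_lt_iff (i := i) (c := 0) (a := a) (by omega)).mpr (by omega)
    omega

/-- Standard bitableaux either satisfy the flag conditions of the bivector or lie in the
cogenerated ideal. -/
theorem bitableau_mem_or {n₀ L : ℕ} {U₀ V₀ lam : ℕ → ℕ} {x : (ℕ → ℕ → ℕ) × (ℕ → ℕ → ℕ)}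
    (hu_top : u (n + 1) = A + 2)
    (hg : IsGT n₀ U₀ (A + 1) lam x.1) (hh : IsGT n₀ V₀ (B + 1) lam x.2)
    (hL : ∑ i ∈ Finset.range n₀, lam i = L) :
    bitableau K A B L x ∈ detIdeal K A B n u v ∨
      (IsGT n (fun i => u (i + 1) - 1) (A + 1) lam x.1 ∧
        IsGT n (fun i => v (i + 1) - 1) (B + 1) lam x.2 ∧ ∑ i ∈ Finset.range n, lam i = L) := by
  by_cases hall : ∀ i, 0 < lam i →
      i < n ∧ u (i + 1) - 1 ≤ ent x.1 i 0 ∧ v (i + 1) - 1 ≤ ent x.2 i 0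
  · right
    have hg' : IsGT n (fun i => u (i + 1) - 1) (A + 1) lam x.1 :=
      hg.of_first_column fun i hi => ⟨(hall i hi).1, (hall i hi).2.1⟩
    have hh' : IsGT n (fun i => v (i + 1) - 1) (B + 1) lam x.2 :=
      hh.of_first_column fun i hi => ⟨(hall i hi).1, (hall i hi).2.2⟩
    refine ⟨hg', hh', ?_⟩
    rw [← hL, ← sum_len hg.lam_anti (n := n) (fun i hi => hg'.lam_zero hi) le_rfl,
      ← sum_len hg.lam_anti (n := n₀) (fun i hi => hg.lam_zero hi) le_rfl]
  · left
    push Not at hall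
    obtain ⟨i, hi, hall⟩ := hall
    rcases lt_or_ge i n with hin | hin
    · have := hall hin
      refine bitableau_mem hg hh hL hin.le hi ?_
      omega
    · have hn : 0 < lam n := hi.trans_le (hg.lam_anti hin)
      have := hg.ent_lt hn
      refine bitableau_mem hg hh hL le_rfl hn (Or.inl ?_)
      omega

end

/-! ### The Hilbert series -/

/-- The generating function of the pairs of tableaux satisfying the flag conditions of the
bivector. -/
theorem exists_pairs_series (A B n : ℕ)
    (u v : ℕ → ℕ)
    (hu_mono : ∀ i j, 1 ≤ i → i < j → j ≤ n → u i < u j)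
    (hv_mono : ∀ i j, 1 ≤ i → i < j → j ≤ n → v i < v j)
    (hu_range : ∀ i, 1 ≤ i → i ≤ n → 1 ≤ u i ∧ u i ≤ A + 1)
    (hv_range : ∀ i, 1 ≤ i → i ≤ n → 1 ≤ v i ∧ v i ≤ B + 1)
    (d : ℕ)
    (hd : (d : ℤ) = ((A : ℤ) + (B : ℤ) + 3) * n -
      ∑ i ∈ Finset.Icc 1 n, ((u i : ℤ) + (v i : ℤ))) :
    ∃ (T : ℕ → Finset ((ℕ → ℕ → ℕ) × (ℕ → ℕ → ℕ))) (H : Polynomial ℤ),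
      (∀ L x, x ∈ T L ↔ ∃ lam, IsGT n (fun i => u (i + 1) - 1) (A + 1) lam x.1 ∧
        IsGT n (fun i => v (i + 1) - 1) (B + 1) lam x.2 ∧ ∑ i ∈ Finset.range n, lam i = L) ∧
      H.eval 1 ≠ 0 ∧
      (PowerSeries.mk fun L => ((T L).card : ℤ)) =
        (H : PowerSeries ℤ) * (PowerSeries.mk 1 : PowerSeries ℤ) ^ d ∧
      (H.natDegree : ℤ) - (d : ℤ) =
        (∑ i ∈ Finset.Icc 1 n, sInf
          ({z : ℤ | ∃ j, 1 ≤ j ∧ j ≤ i ∧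
              z = (B : ℤ) + (u (n - j + 1) : ℤ) - 1 - 2 * ((i : ℤ) - (j : ℤ))} ∪
            {z : ℤ | ∃ j, 1 ≤ j ∧ j ≤ i ∧
              z = (A : ℤ) + (v (n - j + 1) : ℤ) - 1 - 2 * ((i : ℤ) - (j : ℤ))})) -
        ((A : ℤ) + (B : ℤ) + 1) * n := by
  obtain ⟨H, hH1, hH2, hH3⟩ :=
    exists_numerator_bivector A B n u v hu_mono hv_mono hu_range hv_range d hd
  have hT := fun L => exists_finset_pairs n (fun i => u (i + 1) - 1) (fun i => v (i + 1) - 1)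
    (A + 1) (B + 1)
    (fun i j hij hj => by
      have := hu_mono (i + 1) (j + 1) (by omega) (by omega) (by omega)
      have := hu_range (i + 1) (by omega) (by omega)
      omega)
    (fun i hi => by
      have := hu_range (i + 1) (by omega) (by omega)
      omega)
    (fun i j hij hj => by
      have := hv_mono (i + 1) (j + 1) (by omega) (by omega) (by omega)
      have := hv_range (i + 1) (by omega) (by omega)
      omega)
    (fun i hi => by
      have := hv_range (i + 1) (by omega) (by omega)
      omega) L
  choose T hT1 hT2 using hT
  refine ⟨T, H, hT1, hH1, ?_, hH3⟩
  have h1 : ((1 : PowerSeries ℤ) - PowerSeries.X) ^ d * (PowerSeries.mk 1) ^ d = 1 := by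
    rw [← mul_pow, mul_comm, PowerSeries.mk_one_mul_one_sub_eq_one, one_pow]
  have h2 := congrArg (· * (PowerSeries.mk 1 : PowerSeries ℤ) ^ d) hH2
  simp only [mul_assoc, h1, mul_one] at h2
  ext L
  rw [PowerSeries.coeff_mk, hT2]
  rw [h2, PowerSeries.coeff_X_pow_mul]

/-- For the bivector `[1, 2, … | 1, 2, …]` of maximal length there are at least as many pairs of
tableaux as monomials: the numerator is a constant, as its degree is not positive. -/
theorem exists_pairs_generic (A B : ℕ) :
    ∃ T : ℕ → Finset ((ℕ → ℕ → ℕ) × (ℕ → ℕ → ℕ)),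
      (∀ L x, x ∈ T L ↔ ∃ lam, IsGT (min (A + 1) (B + 1)) (fun i => i + 1 - 1) (A + 1) lam x.1 ∧
        IsGT (min (A + 1) (B + 1)) (fun i => i + 1 - 1) (B + 1) lam x.2 ∧
        ∑ i ∈ Finset.range (min (A + 1) (B + 1)), lam i = L) ∧
      ∀ L, PowerSeries.coeff L ((PowerSeries.mk 1 : PowerSeries ℤ) ^ ((A + 1) * (B + 1))) ≤
        ((T L).card : ℤ) := by
  set n := min (A + 1) (B + 1) with hn
  have hgauss : ∀ k : ℕ, 2 * ∑ i ∈ Finset.Icc 1 k, (i : ℤ) = k * (k + 1) := by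
    intro k
    induction k with
    | zero => simp
    | succ k ih =>
      rw [Finset.sum_Icc_succ_top (by omega), mul_add, ih]
      push_cast
      ring
  have hprod : ((n : ℤ) - (A + 1)) * (n - (B + 1)) = 0 := by
    rcases min_choice (A + 1) (B + 1) with h | h
    · rw [hn, h]; push_cast; ring
    · rw [hn, h]; push_cast; ring
  have hd : (((A + 1) * (B + 1) : ℕ) : ℤ) = ((A : ℤ) + (B : ℤ) + 3) * n -
      ∑ i ∈ Finset.Icc 1 n, ((i : ℤ) + (i : ℤ)) := by
    have := hgauss n
    simp only [← two_mul, ← Finset.mul_sum]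
    rw [this]
    push_cast
    linarith
  obtain ⟨T, H, hT, hH1, hH2, hH3⟩ := exists_pairs_series A B n (fun i => i) (fun i => i)
    (fun i j _ h _ => h) (fun i j _ h _ => h) (fun i h1 h2 => ⟨h1, by omega⟩)
    (fun i h1 h2 => ⟨h1, by omega⟩) ((A + 1) * (B + 1)) hd
  refine ⟨T, hT, fun L => ?_⟩
  have hsum : (∑ i ∈ Finset.Icc 1 n, sInf
          ({z : ℤ | ∃ j, 1 ≤ j ∧ j ≤ i ∧
              z = (B : ℤ) + ((n - j + 1 : ℕ) : ℤ) - 1 - 2 * ((i : ℤ) - (j : ℤ))} ∪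
            {z : ℤ | ∃ j, 1 ≤ j ∧ j ≤ i ∧
              z = (A : ℤ) + ((n - j + 1 : ℕ) : ℤ) - 1 - 2 * ((i : ℤ) - (j : ℤ))})) ≤
      ∑ i ∈ Finset.Icc 1 n, (2 * (n : ℤ) - 2 * i) := by
    refine Finset.sum_le_sum fun i hi => ?_
    rw [Finset.mem_Icc] at hi
    have hbdd : BddBelow ({z : ℤ | ∃ j, 1 ≤ j ∧ j ≤ i ∧
              z = (B : ℤ) + ((n - j + 1 : ℕ) : ℤ) - 1 - 2 * ((i : ℤ) - (j : ℤ))} ∪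
            {z : ℤ | ∃ j, 1 ≤ j ∧ j ≤ i ∧
              z = (A : ℤ) + ((n - j + 1 : ℕ) : ℤ) - 1 - 2 * ((i : ℤ) - (j : ℤ))}) := by
      refine ⟨-2 * i - 1, ?_⟩
      rintro z (⟨j, h1, h2, rfl⟩ | ⟨j, h1, h2, rfl⟩) <;> omega
    rcases min_choice (A + 1) (B + 1) with h | h
    · exact csInf_le hbdd (Or.inr ⟨1, le_rfl, hi.1, by omega⟩)
    · exact csInf_le hbdd (Or.inl ⟨1, le_rfl, hi.1, by omega⟩)
  have hdeg : H.natDegree = 0 := by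
    rw [Finset.sum_sub_distrib, ← Finset.mul_sum (f := fun i : ℕ => (i : ℤ)), hgauss,
      Finset.sum_const, Nat.card_Icc, Nat.add_sub_cancel, nsmul_eq_mul] at hsum
    push_cast at hH3 hsum
    have : (H.natDegree : ℤ) ≤ 0 := by linarith
    omega
  obtain ⟨c, rfl⟩ : ∃ c, H = Polynomial.C c := ⟨_, Polynomial.eq_C_of_natDegree_eq_zero hdeg⟩
  rw [Polynomial.eval_C] at hH1
  rw [Polynomial.coe_C] at hH2
  have hcoeff : ∀ L, ((T L).card : ℤ) =
      c * PowerSeries.coeff L ((PowerSeries.mk 1 : PowerSeries ℤ) ^ ((A + 1) * (B + 1))) := by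
    intro L
    rw [← PowerSeries.coeff_C_mul, ← hH2, PowerSeries.coeff_mk]
  have h0 := hcoeff 0
  have hc : 1 ≤ c := by
    rw [PowerSeries.coeff_zero_eq_constantCoeff, map_pow] at h0
    simp at h0
    omega
  have hL := hcoeff L
  have hnn : 0 ≤ PowerSeries.coeff L
      ((PowerSeries.mk 1 : PowerSeries ℤ) ^ ((A + 1) * (B + 1))) := by
    by_contra hneg
    have := mul_neg_of_pos_of_neg (show 0 < c by omega) (not_le.mp hneg)
    omega
  nlinarith

/-- The homogeneous polynomials of degree `L` lie in a space whose dimension is at most the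
number of monomials. -/
theorem exists_span_homogeneous (K σ : Type*) [Field K] [Fintype σ] (L : ℕ) :
    ∃ D : Finset (MvPolynomial σ K),
      MvPolynomial.homogeneousSubmodule σ K L = Submodule.span K (D : Set (MvPolynomial σ K)) ∧
      (D.card : ℤ) ≤
        PowerSeries.coeff L ((PowerSeries.mk 1 : PowerSeries ℤ) ^ Fintype.card σ) := by
  classical
  refine ⟨((Finset.univ : Finset σ).finsuppAntidiag L).image fun e =>
    MvPolynomial.monomial e (1 : K), le_antisymm ?_ ?_, ?_⟩
  · intro p hp
    rw [MvPolynomial.mem_homogeneousSubmodule] at hp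
    rw [p.as_sum]
    refine Submodule.sum_mem _ fun e he => ?_
    rw [show MvPolynomial.monomial e (MvPolynomial.coeff e p) =
      MvPolynomial.coeff e p • MvPolynomial.monomial e (1 : K) by
        rw [MvPolynomial.smul_monomial, smul_eq_mul, mul_one]]
    refine Submodule.smul_mem _ _ (Submodule.subset_span ?_)
    rw [Finset.mem_coe, Finset.mem_image]
    refine ⟨e, ?_, rfl⟩
    have h1 := hp (MvPolynomial.mem_support_iff.mp he)
    rw [Finset.mem_finsuppAntidiag]
    refine ⟨?_, Finset.subset_univ _⟩
    rw [← h1, Finsupp.weight_apply, Finsupp.sum_fintype _ _ (by simp)]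
    simp
  · rw [Submodule.span_le]
    intro p hp
    rw [Finset.mem_coe, Finset.mem_image] at hp
    obtain ⟨e, he, rfl⟩ := hp
    rw [Finset.mem_finsuppAntidiag] at he
    rw [SetLike.mem_coe, MvPolynomial.mem_homogeneousSubmodule]
    refine MvPolynomial.isHomogeneous_monomial _ ?_
    rw [Finsupp.degree_eq_sum]
    exact he.1
  · have h1 : (PowerSeries.mk 1 : PowerSeries ℤ) ^ Fintype.card σ =
        ∏ _i : σ, (PowerSeries.mk 1 : PowerSeries ℤ) := by
      rw [Finset.prod_const, Finset.card_univ]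
    rw [h1, PowerSeries.coeff_prod]
    simp only [PowerSeries.coeff_mk, Pi.one_apply, Finset.prod_const_one, Finset.sum_const,
      nsmul_eq_mul, mul_one]
    exact_mod_cast Finset.card_image_le

/-- A linearly independent family in the span of a set which is not larger spans it. -/
theorem span_le_span_range_of_card {K V ι : Type*} [Field K] [AddCommGroup V] [Module K V]
    [Fintype ι] {f : ι → V} (hf : LinearIndependent K f) (D : Finset V)
    (hle : Submodule.span K (Set.range f) ≤ Submodule.span K (D : Set V))
    (hcard : D.card ≤ Fintype.card ι) :
    Submodule.span K (D : Set V) ≤ Submodule.span K (Set.range f) := by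
  have hfin : Module.Finite K (Submodule.span K (D : Set V)) := Module.Finite.span_finset K D
  have h1 : Module.finrank K (Submodule.span K (D : Set V)) ≤ D.card :=
    finrank_span_finset_le_card (R := K) D
  refine (Submodule.eq_of_le_of_finrank_le hle ?_).ge
  rw [finrank_span_eq_card hf]
  exact h1.trans hcard

/-- Every homogeneous polynomial is a linear combination of standard bitableaux: these are
linearly independent and as numerous as the monomials. -/
theorem homogeneous_le_span_bitableau (K : Type*) [Field K] (A B L : ℕ)
    (T : Finset ((ℕ → ℕ → ℕ) × (ℕ → ℕ → ℕ))) {n : ℕ} {U V : ℕ → ℕ}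
    (hT : ∀ x ∈ T, ∃ lam, IsGT n U (A + 1) lam x.1 ∧
        IsGT n V (B + 1) lam x.2 ∧ ∑ i ∈ Finset.range n, lam i = L)
    (hcard : PowerSeries.coeff L ((PowerSeries.mk 1 : PowerSeries ℤ) ^ ((A + 1) * (B + 1))) ≤
        (T.card : ℤ)) :
    MvPolynomial.homogeneousSubmodule (Fin (A + 1) × Fin (B + 1)) K L ≤
      Submodule.span K (Set.range fun x : T => bitableau K A B L x) := by
  obtain ⟨D, hD, hDcard⟩ := exists_span_homogeneous K (Fin (A + 1) × Fin (B + 1)) L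
  rw [Fintype.card_prod, Fintype.card_fin, Fintype.card_fin] at hDcard
  have hli : LinearIndependent K (fun x : T => bitableau K A B L x) :=
    LinearIndependent.of_comp (flagMap K A B n U V).toLinearMap (linearIndependent_flagMap hT)
  have hle : Submodule.span K (Set.range fun x : T => bitableau K A B L x) ≤
      Submodule.span K (D : Set (MvPolynomial (Fin (A + 1) × Fin (B + 1)) K)) := by
    rw [← hD, Submodule.span_le]
    rintro _ ⟨x, rfl⟩
    obtain ⟨lam, hg, hh, hs⟩ := hT x x.2
    exact (MvPolynomial.mem_homogeneousSubmodule _ _).mpr (isHomogeneous_bitableau hg hs)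
  rw [hD]
  refine span_le_span_range_of_card hli D hle ?_
  rw [Fintype.card_coe]
  exact Int.ofNat_le.mp (hDcard.trans hcard)

/-- The standard bitableaux satisfying the flag conditions of the bivector form a basis of the
determinantal ring. -/
theorem quotDim_detIdeal (K : Type*) [Field K] (A B n : ℕ)
    (u v : ℕ → ℕ)
    (hu_mono : ∀ i j, 1 ≤ i → i < j → j ≤ n → u i < u j)
    (hv_mono : ∀ i j, 1 ≤ i → i < j → j ≤ n → v i < v j)
    (hu_top : u (n + 1) = A + 2) (L : ℕ) (T : Finset ((ℕ → ℕ → ℕ) × (ℕ → ℕ → ℕ)))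
    (hT : ∀ x, x ∈ T ↔ ∃ lam, IsGT n (fun i => u (i + 1) - 1) (A + 1) lam x.1 ∧
        IsGT n (fun i => v (i + 1) - 1) (B + 1) lam x.2 ∧ ∑ i ∈ Finset.range n, lam i = L) :
    quotDim K (detIdeal K A B n u v) L = T.card := by
  obtain ⟨T₀, hT₀, hcard⟩ := exists_pairs_generic A B
  have hspan := homogeneous_le_span_bitableau K A B L (T₀ L) (fun x hx => (hT₀ L x).mp hx)
    (hcard L)
  set I := detIdeal K A B n u v with hI
  -- independence modulo `I` follows from independence of the images under `flagMap`
  have hker : ∀ f ∈ I, flagMap K A B n (fun i => u (i + 1) - 1) (fun i => v (i + 1) - 1) f = 0 :=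
    detIdeal_le_ker hu_mono hv_mono
  have hli : LinearIndependent K (fun x : T => Ideal.Quotient.mkₐ K I (bitableau K A B L x)) :=
    LinearIndependent.of_comp (Ideal.Quotient.liftₐ I _ hker).toLinearMap
      (linearIndependent_flagMap fun x hx => (hT x).mp hx)
  have heq : Submodule.map (Ideal.Quotient.mkₐ K I).toLinearMap
      (MvPolynomial.homogeneousSubmodule (Fin (A + 1) × Fin (B + 1)) K L) =
      Submodule.span K (Set.range fun x : T => Ideal.Quotient.mkₐ K I (bitableau K A B L x)) := by
    apply le_antisymm
    · refine (Submodule.map_mono hspan).trans ?_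
      rw [Submodule.map_span, Submodule.span_le]
      rintro _ ⟨_, ⟨x, rfl⟩, rfl⟩
      obtain ⟨lam, hg, hh, hs⟩ := (hT₀ L x).mp x.2
      rcases bitableau_mem_or (K := K) (v := v) hu_top hg hh hs with h | h
      · have h1 : (Ideal.Quotient.mkₐ K I).toLinearMap (bitableau K A B L x) = 0 :=
          Ideal.Quotient.eq_zero_iff_mem.mpr h
        rw [SetLike.mem_coe, h1]
        exact Submodule.zero_mem _
      · exact Submodule.subset_span ⟨⟨x, (hT x).mpr ⟨lam, h⟩⟩, rfl⟩
    · rw [Submodule.span_le]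
      rintro _ ⟨x, rfl⟩
      obtain ⟨lam, hg, hh, hs⟩ := (hT x).mp x.2
      exact Submodule.mem_map_of_mem (isHomogeneous_bitableau hg hs)
  rw [quotDim, heq, finrank_span_eq_card hli, Fintype.card_coe]

theorem cor3_determinantal_a_invariant (K : Type*) [Field K] (A B n : ℕ) (hn : 1 ≤ n)
    (u v : ℕ → ℕ)
    (hu_mono : ∀ i j, 1 ≤ i → i < j → j ≤ n → u i < u j)
    (hv_mono : ∀ i j, 1 ≤ i → i < j → j ≤ n → v i < v j)
    (hu_range : ∀ i, 1 ≤ i → i ≤ n → 1 ≤ u i ∧ u i ≤ A + 1)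
    (hv_range : ∀ i, 1 ≤ i → i ≤ n → 1 ≤ v i ∧ v i ≤ B + 1)
    (hu_top : u (n + 1) = A + 2) (hv_top : v (n + 1) = B + 2)
    (d : ℕ)
    (hd : (d : ℤ) = ((A : ℤ) + (B : ℤ) + 3) * n -
      ∑ i ∈ Finset.Icc 1 n, ((u i : ℤ) + (v i : ℤ))) :
    ∃ H : Polynomial ℤ, H.eval 1 ≠ 0 ∧
      hilbertSeries K (detIdeal K A B n u v) * (1 - PowerSeries.X) ^ d =
        (↑H : PowerSeries ℤ) ∧
      (H.natDegree : ℤ) - (d : ℤ) =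
        (∑ i ∈ Finset.Icc 1 n, sInf
          ({z : ℤ | ∃ j, 1 ≤ j ∧ j ≤ i ∧
              z = (B : ℤ) + (u (n - j + 1) : ℤ) - 1 - 2 * ((i : ℤ) - (j : ℤ))} ∪
            {z : ℤ | ∃ j, 1 ≤ j ∧ j ≤ i ∧
              z = (A : ℤ) + (v (n - j + 1) : ℤ) - 1 - 2 * ((i : ℤ) - (j : ℤ))})) -
        ((A : ℤ) + (B : ℤ) + 1) * n := by
  obtain ⟨T, H, hT, hH1, hH2, hH3⟩ :=
    exists_pairs_series A B n u v hu_mono hv_mono hu_range hv_range d hd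
  refine ⟨H, hH1, ?_, hH3⟩
  have h1 : hilbertSeries K (detIdeal K A B n u v) =
      PowerSeries.mk fun L => ((T L).card : ℤ) := by
    ext L
    rw [hilbertSeries, PowerSeries.coeff_mk, PowerSeries.coeff_mk,
      quotDim_detIdeal K A B n u v hu_mono hv_mono hu_top L (T L) (hT L)]
  rw [h1, hH2, mul_assoc, ← mul_pow, PowerSeries.mk_one_mul_one_sub_eq_one, one_pow, mul_one]
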